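/- Let Φ be an aperiodic self-similar IFS on a compact interval I, let ν be a self-similar measure for Φ, and let g : I → ℝ be a C^{1+γ} smooth map (γ > 0) whose derivative does not vanish on I. Then the push-forward measure g_*ν is both pointwise absolutely normal and a Rajchman measure. -/

import Mathlib

/-!
*The measure `ν` is Rajchman.* Self-similarity makes `u ↦ ‖charFun ν (exp u)‖ ^ 2` a subsolution of
the renewal equation `ψ u = ∑ i, p i * ψ (u - ℓ i)` with steps `ℓ i = -log |r i|`. Since `ν` has no
atoms, its averages over windows tend to zero by Wiener's lemma. Aperiodicity says that the steps
are non-lattice; a Choquet–Deny argument together with the conserved quantity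
`∑ i, p i * ∫ x in (u - ℓ i)..u, h x` of the renewal equation then forces such a subsolution to tend
to zero.

*The image measure is Rajchman.* At every scale `ν` is a convex combination of affine copies of
itself of about that size. At a scale equal to a large multiple of the wavelength `1 / |q|`, the map
`g` is affine up to an error negligible against the wavelength, so the oscillatory integral over
each copy is a value of the Fourier transform of `ν` at a large frequency.

*Almost every point of the image is absolutely normal.* For frequencies `q j` growing by a large
factor at each step, `cos (2 π q j g + α)` has small mean on copies of size about `1 / q j` and is
nearly constant on copies of size about `1 / q (j + 1)`. These functions therefore satisfy the
exponential moment bound of independent, almost centred variables, and Chernoff's inequality with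
the Borel–Cantelli lemma bounds their sums almost surely. Splitting the frequencies `n p ^ k` into
residue classes of `k` gives the decay of the Weyl sums, and Weyl's criterion concludes.
-/

open MeasureTheory Filter Set
open scoped ENNReal Topology

noncomputable section

/-- The Fourier transform of a Borel measure on `ℝ` at frequency `q`. -/
def fourierTransform (ν : Measure ℝ) (q : ℝ) : ℂ :=
  ∫ x, Complex.exp (((2 * Real.pi * q * x : ℝ) : ℂ) * Complex.I) ∂ν

/-- `ν` is a Rajchman measure: its Fourier transform vanishes at infinity. -/
def Rajchman (ν : Measure ℝ) : Prop :=
  Tendsto (fun q : ℝ => fourierTransform ν q) (cocompact ℝ) (nhds 0)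

/-- `x` is normal to base `p`: the orbit of `x` under multiplication by `p`, taken mod 1,
equidistributes for the Haar (Lebesgue) measure on the circle `ℝ/ℤ`. -/
def PNormal (p : ℕ) (x : ℝ) : Prop :=
  ∀ g : C(UnitAddCircle, ℝ),
    Tendsto (fun N : ℕ => (N : ℝ)⁻¹ * ∑ k ∈ Finset.Icc 1 N, g (((p : ℝ) ^ k * x : ℝ)))
      atTop (nhds (∫ z, g z))

/-- `x` is absolutely normal: normal to every integer base `p ≥ 2`. -/
def AbsolutelyNormal (x : ℝ) : Prop := ∀ p : ℕ, 2 ≤ p → PNormal p x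

/-- A measure is pointwise absolutely normal if almost every point is absolutely normal. -/
def PointwiseAbsolutelyNormal (ν : Measure ℝ) : Prop :=
  ∀ᵐ x ∂ν, AbsolutelyNormal x

/-! ### Non-lattice renewal equations -/

section Nonlattice

variable {ι : Type*} {ℓ : ι → ℝ}

/-- A family of real numbers is aperiodic (non-lattice) if it is not contained in a cyclic subgroup
`ℤ c` of `ℝ`. -/
def IsAperiodic (ℓ : ι → ℝ) : Prop :=
  ¬ ∃ c : ℝ, ∀ i, ∃ m : ℤ, ℓ i = c * m

lemma IsAperiodic.neg (h : IsAperiodic ℓ) : IsAperiodic fun i => -ℓ i := by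
  rintro ⟨c, hc⟩
  refine h ⟨-c, fun i => ?_⟩
  obtain ⟨m, hm⟩ := hc i
  exact ⟨m, by linarith⟩

lemma IsAperiodic.dense_closure (h : IsAperiodic ℓ) :
    Dense (AddSubgroup.closure (range ℓ) : Set ℝ) := by
  refine (AddSubgroup.dense_or_cyclic _).resolve_right ?_
  rintro ⟨c, hc⟩
  refine h ⟨c, fun i => ?_⟩
  have hi : ℓ i ∈ AddSubgroup.closure (range ℓ) := AddSubgroup.subset_closure (mem_range_self i)
  rw [hc, AddSubgroup.mem_closure_singleton] at hi
  obtain ⟨m, hm⟩ := hi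
  exact ⟨m, by rw [← hm, zsmul_eq_mul, mul_comm]⟩

lemma exists_sub_of_mem_addSubgroup_closure {G : Type*} [AddCommGroup G] {s : Set G} {x : G}
    (hx : x ∈ AddSubgroup.closure s) :
    ∃ y ∈ AddSubmonoid.closure s, ∃ z ∈ AddSubmonoid.closure s, x = y - z := by
  induction hx using AddSubgroup.closure_induction with
  | mem x hx => exact ⟨x, AddSubmonoid.subset_closure hx, 0, zero_mem _, (sub_zero x).symm⟩
  | zero => exact ⟨0, zero_mem _, 0, zero_mem _, (sub_zero 0).symm⟩
  | add x y _ _ hx hy =>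
    obtain ⟨a, ha, b, hb, rfl⟩ := hx
    obtain ⟨c, hc, d, hd, rfl⟩ := hy
    exact ⟨a + c, add_mem ha hc, b + d, add_mem hb hd, by abel⟩
  | neg x _ hx =>
    obtain ⟨a, ha, b, hb, rfl⟩ := hx
    exact ⟨b, hb, a, ha, by abel⟩

lemma exists_abs_sub_le_of_arithmetic_progression {d : ℝ} (hd : 0 < d) {a v : ℝ} {N : ℕ}
    (hv : v ∈ Icc a (a + N * d)) : ∃ j ≤ N, |v - (a + j * d)| ≤ d := by
  have hq : 0 ≤ (v - a) / d := div_nonneg (by linarith [hv.1]) hd.le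
  have hfloor := Nat.floor_le hq
  have hfloor' := Nat.lt_floor_add_one ((v - a) / d)
  rw [le_div_iff₀ hd] at hfloor
  rw [div_lt_iff₀ hd] at hfloor'
  refine ⟨⌊(v - a) / d⌋₊, Nat.floor_le_of_le ?_, ?_⟩
  · rw [div_le_iff₀ hd]
    linarith [hv.2]
  · rw [abs_of_nonneg (by linarith)]
    linarith

/-- If `0 < s - z < δ` with `s`, `z` in the semigroup, then the points `j s + (N - j) z` for `j ≤ N`
form an arithmetic progression with step `s - z`. -/
lemma IsAperiodic.exists_finite_net (h : IsAperiodic ℓ) {δ : ℝ} (hδ : 0 < δ) (L : ℝ) :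
    ∃ X : ℝ, ∃ F : Finset ℝ, (∀ t ∈ F, t ∈ AddSubmonoid.closure (range ℓ)) ∧
      ∀ v ∈ Icc X (X + L), ∃ t ∈ F, |v - t| ≤ δ := by
  obtain ⟨x, hx, hx0, hxδ⟩ := h.dense_closure.exists_between hδ
  obtain ⟨s, hs, z, hz, rfl⟩ := exists_sub_of_mem_addSubgroup_closure hx
  obtain ⟨N, hN⟩ := exists_nat_ge (L / (s - z))
  rw [div_le_iff₀ hx0] at hN
  refine ⟨N * z, (Finset.range (N + 1)).image fun j : ℕ => (N : ℝ) * z + j * (s - z), ?_, ?_⟩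
  · refine Finset.forall_mem_image.2 fun j hj => ?_
    have hjN : j ≤ N := Finset.mem_range_succ_iff.1 hj
    have hsplit : (N : ℝ) * z + j * (s - z) = (N - j) • z + j • s := by
      simp only [nsmul_eq_mul, Nat.cast_sub hjN]
      ring
    rw [hsplit]
    exact add_mem (nsmul_mem hz _) (nsmul_mem hs _)
  · intro v hv
    obtain ⟨j, hjN, hj⟩ := exists_abs_sub_le_of_arithmetic_progression hx0
      (Icc_subset_Icc_right (by linarith) hv)
    exact ⟨_, Finset.mem_image_of_mem _ (Finset.mem_range_succ_iff.2 hjN), hj.trans hxδ.le⟩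

end Nonlattice

section Delay

variable {u₀ δ : ℝ}

lemma delay_induction {P : ℝ → Prop} (hδ : 0 < δ) (hbase : ∀ u ≤ u₀, P u)
    (hstep : ∀ u, (∀ v ≤ u - δ, P v) → P u) (u : ℝ) : P u := by
  have hP : ∀ k : ℕ, ∀ u ≤ u₀ + k * δ, P u := by
    intro k
    induction k with
    | zero => simpa using hbase
    | succ k ih =>
      intro u hu
      push_cast at hu
      exact hstep u fun v hv => ih v (by linarith)
  obtain ⟨k, hk⟩ := exists_nat_ge ((u - u₀) / δ)
  rw [div_le_iff₀ hδ] at hk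
  exact hP k u (by linarith)

lemma iterate_stable_of_delay {T : (ℝ → ℝ) → ℝ → ℝ} (hδ : 0 ≤ δ)
    (hcausal : ∀ h₁ h₂ u, (∀ v ≤ u - δ, h₁ v = h₂ v) → T h₁ u = T h₂ u)
    {ψ : ℝ → ℝ} (hψ : ∀ u ≤ u₀, T ψ u = ψ u) {j k : ℕ} (hkj : k ≤ j) {u : ℝ}
    (hu : u ≤ u₀ + k * δ) : T^[j] ψ u = T^[k] ψ u := by
  have hsucc : ∀ k : ℕ, ∀ u ≤ u₀ + k * δ, T^[k + 1] ψ u = T^[k] ψ u := by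
    intro k
    induction k with
    | zero => simpa using hψ
    | succ k ih =>
      intro u hu
      push_cast at hu
      rw [Function.iterate_succ_apply']
      conv_rhs => rw [Function.iterate_succ_apply']
      exact hcausal _ _ _ fun v hv => ih v (by linarith)
  induction j, hkj using Nat.le_induction with
  | base => rfl
  | succ j hkj ih =>
    rw [← ih]
    refine hsucc j u (hu.trans ?_)
    gcongr

lemma exists_fixedPoint_of_delay {T : (ℝ → ℝ) → ℝ → ℝ} (hδ : 0 < δ)
    (hcont : ∀ h, Continuous h → Continuous (T h))
    (hcausal : ∀ h₁ h₂ u, (∀ v ≤ u - δ, h₁ v = h₂ v) → T h₁ u = T h₂ u)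
    {ψ : ℝ → ℝ} (hψc : Continuous ψ) (hψ : ∀ u ≤ u₀, T ψ u = ψ u) :
    ∃ h, Continuous h ∧ T h = h ∧ ∀ u ≤ u₀, h u = ψ u := by
  set h : ℝ → ℝ := fun u => T^[⌈(u - u₀) / δ⌉₊] ψ u
  have heq : ∀ k : ℕ, ∀ u ≤ u₀ + k * δ, h u = T^[k] ψ u := by
    intro k u hu
    have hceil : ⌈(u - u₀) / δ⌉₊ ≤ k := by
      rw [Nat.ceil_le, div_le_iff₀ hδ]
      linarith
    have hle := Nat.le_ceil ((u - u₀) / δ)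
    rw [div_le_iff₀ hδ] at hle
    exact (iterate_stable_of_delay hδ.le hcausal hψ hceil (by linarith)).symm
  have hreach : ∀ u, ∃ k : ℕ, u < u₀ + k * δ := by
    intro u
    obtain ⟨k, hk⟩ := exists_nat_gt ((u - u₀) / δ)
    rw [div_lt_iff₀ hδ] at hk
    exact ⟨k, by linarith⟩
  have hiter : ∀ k, Continuous (T^[k] ψ) := by
    intro k
    induction k with
    | zero => exact hψc
    | succ k ih => simpa only [Function.iterate_succ_apply'] using hcont _ ih
  refine ⟨h, continuous_iff_continuousAt.2 fun u => ?_, funext fun u => ?_, ?_⟩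
  · obtain ⟨k, hk⟩ := hreach u
    refine (hiter k).continuousAt.congr ?_
    filter_upwards [gt_mem_nhds hk] with v hv using (heq k v hv.le).symm
  · obtain ⟨k, hk⟩ := hreach u
    have hk' : u ≤ u₀ + (k + 1 : ℕ) * δ := by
      push_cast
      linarith
    rw [heq (k + 1) u hk', Function.iterate_succ_apply']
    exact hcausal _ _ _ fun v hv => heq k v (by linarith)
  · simpa using heq 0

end Delay

section Renewal

variable {ι : Type*} [Fintype ι] {p ℓ : ι → ℝ} {lm lM : ℝ} {h ψ : ℝ → ℝ}

/-- The averaging operator `h ↦ ∑ i, p i * h (· - ℓ i)` of the random walk with steps `-ℓ i`. The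
renewal equation is the equation `h = renewalOp p ℓ h`. -/
def renewalOp (p ℓ : ι → ℝ) (h : ℝ → ℝ) (u : ℝ) : ℝ :=
  ∑ i, p i * h (u - ℓ i)

lemma renewalOp_le_renewalOp (hp : ∀ i, 0 ≤ p i) {h₁ h₂ : ℝ → ℝ} {u : ℝ}
    (hle : ∀ i, h₁ (u - ℓ i) ≤ h₂ (u - ℓ i)) : renewalOp p ℓ h₁ u ≤ renewalOp p ℓ h₂ u :=
  Finset.sum_le_sum fun i _ => mul_le_mul_of_nonneg_left (hle i) (hp i)

lemma renewalOp_const (hp1 : ∑ i, p i = 1) (c u : ℝ) : renewalOp p ℓ (fun _ => c) u = c := by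
  simp only [renewalOp, ← Finset.sum_mul, hp1, one_mul]

lemma continuous_renewalOp (hc : Continuous h) : Continuous (renewalOp p ℓ h) := by
  unfold renewalOp
  fun_prop

lemma abs_renewalOp_sub_le (hp : ∀ i, 0 ≤ p i) (hp1 : ∑ i, p i = 1) {η u v : ℝ}
    (hη : ∀ i, |h (u - ℓ i) - h (v - ℓ i)| ≤ η) :
    |renewalOp p ℓ h u - renewalOp p ℓ h v| ≤ η := by
  rw [renewalOp, renewalOp, ← Finset.sum_sub_distrib]
  refine (Finset.abs_sum_le_sum_abs _ _).trans ?_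
  calc ∑ i, |p i * _ - p i * _| ≤ ∑ i, p i * η := by
        refine Finset.sum_le_sum fun i _ => ?_
        rw [← mul_sub, abs_mul, abs_of_nonneg (hp i)]
        exact mul_le_mul_of_nonneg_left (hη i) (hp i)
    _ = η := by rw [← Finset.sum_mul, hp1, one_mul]

/-- The modulus of continuity on a compact window propagates to infinity. -/
lemma exists_modulus_of_renewal (hp : ∀ i, 0 ≤ p i) (hp1 : ∑ i, p i = 1) (hlm : 0 < lm)
    (hℓ : ∀ i, lm ≤ ℓ i) (hℓM : ∀ i, ℓ i ≤ lM) (hc : Continuous h) {u₁ : ℝ}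
    (hrec : ∀ u, u₁ ≤ u → h u = renewalOp p ℓ h u) {η : ℝ} (hη : 0 < η) :
    ∃ δ > 0, ∀ u ≥ u₁ - lM, ∀ v ≥ u₁ - lM, |u - v| ≤ δ → |h u - h v| ≤ η := by
  obtain ⟨δ, hδ, hwindow⟩ := Metric.uniformContinuousOn_iff.1
    ((isCompact_Icc (a := u₁ - lM) (b := u₁ + 1)).uniformContinuousOn_of_continuous
      hc.continuousOn) η hη
  have hbase : ∀ u ∈ Icc (u₁ - lM) (u₁ + 1), ∀ v ∈ Icc (u₁ - lM) (u₁ + 1),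
      |u - v| ≤ min (δ / 2) 1 → |h u - h v| ≤ η := fun u hu v hv huv =>
    (hwindow u hu v hv (by rw [Real.dist_eq]; linarith [min_le_left (δ / 2) 1])).le
  refine ⟨min (δ / 2) 1, by positivity, ?_⟩
  have hprop : ∀ w, ∀ u ∈ Icc (u₁ - lM) w, ∀ v ∈ Icc (u₁ - lM) w,
      |u - v| ≤ min (δ / 2) 1 → |h u - h v| ≤ η := by
    refine delay_induction hlm (u₀ := u₁ + 1) (fun w hw u hu v hv => ?_)
      fun w ih u hu v hv huv => ?_
    · exact hbase u ⟨hu.1, hu.2.trans hw⟩ v ⟨hv.1, hv.2.trans hw⟩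
    have hdist : |u - v| ≤ 1 := huv.trans (min_le_right _ _)
    rw [abs_le] at hdist
    by_cases hrange : u₁ ≤ u ∧ u₁ ≤ v
    · rw [hrec u hrange.1, hrec v hrange.2]
      refine abs_renewalOp_sub_le hp hp1 fun i => ih (w - lm) le_rfl _ ⟨?_, ?_⟩ _ ⟨?_, ?_⟩ ?_
      · linarith [hℓM i]
      · linarith [hℓ i, hu.2]
      · linarith [hℓM i]
      · linarith [hℓ i, hv.2]
      · rwa [sub_sub_sub_cancel_right]
    · have hle : u ≤ u₁ + 1 ∧ v ≤ u₁ + 1 := by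
        by_contra hcon
        refine hrange ⟨?_, ?_⟩ <;> by_contra hlt <;> exact hcon ⟨by linarith, by linarith⟩
      exact hbase u ⟨hu.1, hle.1⟩ v ⟨hv.1, hle.2⟩ huv
  exact fun u hu v hv =>
    hprop (max u v) u ⟨hu, le_max_left _ _⟩ v ⟨hv, le_max_right _ _⟩

lemma hasDerivAt_integral_sub_left (hc : Continuous h) (s x : ℝ) :
    HasDerivAt (fun u => ∫ y in (u - s)..u, h y) (h x - h (x - s)) x := by
  have hprim : ∀ y, HasDerivAt (fun u => ∫ x in (0 : ℝ)..u, h x) (h y) y := fun y =>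
    intervalIntegral.integral_hasDerivAt_right (hc.intervalIntegrable _ _)
      hc.stronglyMeasurable.stronglyMeasurableAtFilter hc.continuousAt
  refine ((hprim x).sub ((hprim (x - s)).comp_sub_const x s)).congr_of_eventuallyEq
    (Eventually.of_forall fun u => ?_)
  exact (intervalIntegral.integral_interval_sub_left (hc.intervalIntegrable _ _)
    (hc.intervalIntegrable _ _)).symm

lemma sum_integral_eq_of_renewal (hp1 : ∑ i, p i = 1) (hc : Continuous h) {u₁ : ℝ}
    (hrec : ∀ u, u₁ ≤ u → h u = renewalOp p ℓ h u) {u : ℝ} (hu : u₁ ≤ u) :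
    ∑ i, p i * ∫ x in (u - ℓ i)..u, h x = ∑ i, p i * ∫ x in (u₁ - ℓ i)..u₁, h x := by
  have hderiv : ∀ x, HasDerivAt (fun u => ∑ i, p i * ∫ x in (u - ℓ i)..u, h x)
      (h x - renewalOp p ℓ h x) x := by
    intro x
    have hsum : h x - renewalOp p ℓ h x = ∑ i, p i * (h x - h (x - ℓ i)) := by
      simp only [renewalOp, mul_sub, Finset.sum_sub_distrib, ← Finset.sum_mul, hp1, one_mul]
    rw [hsum]
    exact HasDerivAt.fun_sum fun i _ =>
      (hasDerivAt_integral_sub_left hc (ℓ i) x).const_mul (p i)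
  refine constant_of_has_deriv_right_zero (b := u)
    (f := fun u => ∑ i, p i * ∫ x in (u - ℓ i)..u, h x)
    (fun x _ => (hderiv x).continuousAt.continuousWithinAt) (fun x hx => ?_) u ⟨hu, le_rfl⟩
  rw [← sub_eq_zero.2 (hrec x hx.1)]
  exact (hderiv x).hasDerivWithinAt

lemma tendsto_of_tendsto_weighted_sum {α : Type*} {F : Filter α} {x : ι → α → ℝ} {c : ℝ}
    (hp : ∀ i, 0 < p i) (hp1 : ∑ i, p i = 1) (hup : ∀ i, ∀ δ > 0, ∀ᶠ a in F, x i a < c + δ)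
    (hlim : Tendsto (fun a => ∑ i, p i * x i a) F (𝓝 c)) (j : ι) : Tendsto (x j) F (𝓝 c) := by
  refine tendsto_order.2 ⟨fun b hb => ?_, fun b hb => ?_⟩
  · have hδ : 0 < p j * (c - b) / 2 := by
      have := mul_pos (hp j) (sub_pos.2 hb)
      linarith
    filter_upwards [eventually_all.2 fun i => hup i _ hδ,
      hlim.eventually (lt_mem_nhds (sub_lt_self c hδ))] with a hle hsum
    set δ := p j * (c - b) / 2
    have hdefect : p j * (c + δ - x j a) ≤ ∑ i, p i * (c + δ - x i a) :=
      Finset.single_le_sum (fun i _ => mul_nonneg (hp i).le (sub_nonneg.2 (hle i).le))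
        (Finset.mem_univ j)
    simp only [mul_sub, Finset.sum_sub_distrib, ← Finset.sum_mul, hp1, one_mul] at hdefect
    refine lt_of_mul_lt_mul_left ?_ (hp j).le
    have : 0 < p j * δ := mul_pos (hp j) hδ
    have hδ' : p j * (c - b) = 2 * δ := by ring
    linarith
  · filter_upwards [hup j (b - c) (sub_pos.2 hb)] with a ha
    linarith

/-- Choquet–Deny: where `h` is close to its upper limit, the renewal equation forces all the values
it averages to be close to it as well. -/
lemma tendsto_sub_of_mem_addSubmonoid_closure {α : Type*} {F : Filter α} (hp : ∀ i, 0 < p i)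
    (hp1 : ∑ i, p i = 1) {u₁ c : ℝ} (hrec : ∀ u, u₁ ≤ u → h u = renewalOp p ℓ h u)
    (hup : ∀ δ > 0, ∀ᶠ u in atTop, h u < c + δ) {s : ℝ}
    (hs : s ∈ AddSubmonoid.closure (range ℓ)) :
    ∀ x : α → ℝ, Tendsto x F atTop → Tendsto (fun a => h (x a)) F (𝓝 c) →
      Tendsto (fun a => h (x a - s)) F (𝓝 c) := by
  induction hs using AddSubmonoid.closure_induction with
  | mem s hs =>
    obtain ⟨j, rfl⟩ := hs
    intro x hx hlim
    have hshift : ∀ i, Tendsto (fun a => x a - ℓ i) F atTop := fun i =>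
      tendsto_atTop_add_const_right F (-ℓ i) hx
    refine tendsto_of_tendsto_weighted_sum (x := fun i a => h (x a - ℓ i)) hp hp1
      (fun i δ hδ => (hshift i).eventually (hup δ hδ)) (hlim.congr' ?_) j
    filter_upwards [hx.eventually_ge_atTop u₁] with a ha using hrec _ ha
  | zero => simp
  | add s s' _ _ ihs ihs' =>
    intro x hx hlim
    have hshift : Tendsto (fun a => x a - s) F atTop := tendsto_atTop_add_const_right F (-s) hx
    simpa only [sub_sub] using ihs' _ hshift (ihs x hx hlim)

lemma exists_window_limsup_sub_le (hp : ∀ i, 0 < p i) (hp1 : ∑ i, p i = 1) (hlm : 0 < lm)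
    (hℓ : ∀ i, lm ≤ ℓ i) (hℓM : ∀ i, ℓ i ≤ lM) (haper : IsAperiodic ℓ) (hc : Continuous h)
    (hrange : ∀ u, h u ∈ Icc 0 1) {u₁ : ℝ} (hrec : ∀ u, u₁ ≤ u → h u = renewalOp p ℓ h u)
    {η : ℝ} (hη : 0 < η) :
    ∃ w ≥ u₁, ∀ v ∈ Icc (w - lM) w, limsup h atTop - η ≤ h v := by
  have hbdd : IsBoundedUnder (· ≤ ·) atTop h := isBoundedUnder_of ⟨1, fun u => (hrange u).2⟩
  have hcobdd : IsCoboundedUnder (· ≤ ·) atTop h :=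
    (isBoundedUnder_of ⟨0, fun u => (hrange u).1⟩ :
      IsBoundedUnder (· ≥ ·) atTop h).isCoboundedUnder_le
  obtain ⟨x, hxlim, hxtop⟩ := exists_seq_tendsto_limsup hcobdd hbdd
  have hup : ∀ δ > 0, ∀ᶠ u in atTop, h u < limsup h atTop + δ := fun δ hδ =>
    eventually_lt_of_limsup_lt (lt_add_of_pos_right _ hδ) hbdd
  obtain ⟨δ, hδ, hmod⟩ :=
    exists_modulus_of_renewal (fun i => (hp i).le) hp1 hlm hℓ hℓM hc hrec (half_pos hη)
  obtain ⟨X, F, hF, hnet⟩ := haper.exists_finite_net hδ lM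
  have hclose : ∀ᶠ k in atTop, ∀ t ∈ F, limsup h atTop - η / 2 < h (x k - t) :=
    (eventually_all_finset F).2 fun t ht =>
      (tendsto_sub_of_mem_addSubmonoid_closure hp hp1 hrec hup (hF t ht) x hxtop hxlim).eventually
        (lt_mem_nhds (sub_lt_self _ (half_pos hη)))
  have hshift : ∀ s, Tendsto (fun k => x k - s) atTop atTop := fun s =>
    tendsto_atTop_add_const_right atTop (-s) hxtop
  have hlate : ∀ᶠ k in atTop, ∀ t ∈ F, u₁ - lM ≤ x k - t :=
    (eventually_all_finset F).2 fun t _ => (hshift t).eventually_ge_atTop _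
  obtain ⟨k, hk, hkF, hkX⟩ := (hclose.and (hlate.and ((hshift X).eventually_ge_atTop u₁))).exists
  refine ⟨x k - X, hkX, fun v hv => ?_⟩
  obtain ⟨t, ht, hvt⟩ := hnet (x k - v) ⟨by linarith [hv.2], by linarith [hv.1]⟩
  have hnear : |h (x k - t) - h v| ≤ η / 2 :=
    hmod _ (hkF t ht) v (by linarith [hv.1]) (by rwa [sub_right_comm])
  linarith [hk t ht, (abs_le.1 hnear).2]

/-- The conserved quantity `∑ i, p i * ∫ x in (u - ℓ i)..u, h x` sees the upper limit of `h` on the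
windows on which `h` is almost equal to it. -/
lemma limsup_mul_le_of_renewal (hp : ∀ i, 0 < p i) (hp1 : ∑ i, p i = 1) (hlm : 0 < lm)
    (hℓ : ∀ i, lm ≤ ℓ i) (hℓM : ∀ i, ℓ i ≤ lM) (haper : IsAperiodic ℓ) (hc : Continuous h)
    (hrange : ∀ u, h u ∈ Icc 0 1) {u₁ : ℝ} (hrec : ∀ u, u₁ ≤ u → h u = renewalOp p ℓ h u) :
    limsup h atTop * ∑ i, p i * ℓ i ≤ ∑ i, p i * ∫ x in (u₁ - ℓ i)..u₁, h x := by
  have happrox : ∀ η > 0, (limsup h atTop - η) * ∑ i, p i * ℓ i ≤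
      ∑ i, p i * ∫ x in (u₁ - ℓ i)..u₁, h x := by
    intro η hη
    obtain ⟨w, hw, hwindow⟩ :=
      exists_window_limsup_sub_le hp hp1 hlm hℓ hℓM haper hc hrange hrec hη
    rw [← sum_integral_eq_of_renewal hp1 hc hrec hw, Finset.mul_sum]
    refine Finset.sum_le_sum fun i _ => ?_
    have hle : ∫ _ in (w - ℓ i)..w, (limsup h atTop - η) ≤ ∫ x in (w - ℓ i)..w, h x :=
      intervalIntegral.integral_mono_on (by linarith [hℓ i]) (by simp)
        (hc.intervalIntegrable _ _) fun x hx => hwindow x ⟨by linarith [hx.1, hℓM i], hx.2⟩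
    rw [intervalIntegral.integral_const, smul_eq_mul, sub_sub_cancel] at hle
    calc (limsup h atTop - η) * (p i * ℓ i) = p i * (ℓ i * (limsup h atTop - η)) := by ring
      _ ≤ p i * ∫ x in (w - ℓ i)..w, h x := mul_le_mul_of_nonneg_left hle (hp i).le
  have hlim : Tendsto (fun η => (limsup h atTop - η) * ∑ i, p i * ℓ i) (𝓝[>] 0)
      (𝓝 ((limsup h atTop - 0) * ∑ i, p i * ℓ i)) :=
    ((tendsto_id.mono_left nhdsWithin_le_nhds).const_sub _).mul_const _
  rw [sub_zero] at hlim
  exact le_of_tendsto hlim (eventually_nhdsWithin_of_forall happrox)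

lemma exists_renewal_majorant (hp : ∀ i, 0 ≤ p i) (hp1 : ∑ i, p i = 1) (hlm : 0 < lm)
    (hℓ : ∀ i, lm ≤ ℓ i) (hc : Continuous ψ) (hrange : ∀ u, ψ u ∈ Icc 0 1)
    (hsub : ∀ u, ψ u ≤ renewalOp p ℓ ψ u) (u₁ : ℝ) :
    ∃ h, Continuous h ∧ (∀ u, ψ u ≤ h u) ∧ (∀ u, h u ≤ 1) ∧
      (∀ u, u₁ ≤ u → h u = renewalOp p ℓ h u) ∧
      ∀ u ≤ u₁, h u ≤ ψ u + renewalOp p ℓ ψ u := by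
  -- The cut-off `χ` makes the passage from `ψ` to a solution of the renewal equation continuous.
  obtain ⟨χ, hχ0, hχ1, hχ⟩ := exists_continuous_zero_one_of_isClosed (isClosed_Ici (a := u₁))
    (isClosed_Iic (a := u₁ - lm)) (Ici_disjoint_Iic.2 (by linarith))
  obtain ⟨h, hhc, hfix, hψ⟩ := exists_fixedPoint_of_delay (u₀ := u₁ - lm) hlm
    (T := fun h u => χ u * ψ u + (1 - χ u) * renewalOp p ℓ h u)
    (fun h hh => by have := continuous_renewalOp (p := p) (ℓ := ℓ) hh; fun_prop)
    (fun h₁ h₂ u heq => by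
      have : renewalOp p ℓ h₁ u = renewalOp p ℓ h₂ u :=
        Finset.sum_congr rfl fun i _ => by rw [heq (u - ℓ i) (by linarith [hℓ i])]
      simp only [this])
    hc (fun u hu => by simp [hχ1 hu])
  have hh : ∀ u, h u = χ u * ψ u + (1 - χ u) * renewalOp p ℓ h u := fun u => (congrFun hfix u).symm
  have hχ' : ∀ u, 0 ≤ 1 - χ u := fun u => sub_nonneg.2 (hχ u).2
  refine ⟨h, hhc, ?_, ?_, fun u hu => ?_, fun u hu => ?_⟩
  · refine delay_induction hlm (fun u hu => (hψ u hu).ge) fun u ih => ?_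
    have hA : ψ u ≤ renewalOp p ℓ h u := (hsub u).trans
      (renewalOp_le_renewalOp hp fun i => ih _ (by linarith [hℓ i]))
    rw [hh u]
    linarith [mul_le_mul_of_nonneg_left hA (hχ' u)]
  · refine delay_induction hlm (fun u hu => (hψ u hu).trans_le (hrange u).2) fun u ih => ?_
    have hA : renewalOp p ℓ h u ≤ 1 := (renewalOp_le_renewalOp (h₂ := fun _ => 1) hp
      fun i => ih _ (by linarith [hℓ i])).trans_eq (renewalOp_const hp1 1 u)
    rw [hh u]
    linarith [mul_le_mul_of_nonneg_left hA (hχ' u),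
      mul_le_mul_of_nonneg_left (hrange u).2 (hχ u).1]
  · have hχu : χ u = 0 := hχ0 hu
    linarith [hh u, congrArg (· * ψ u) hχu, congrArg (· * renewalOp p ℓ h u) hχu]
  · have hA : renewalOp p ℓ h u = renewalOp p ℓ ψ u :=
      Finset.sum_congr rfl fun i _ => by rw [hψ (u - ℓ i) (by linarith [hℓ i])]
    rw [hh u, hA]
    linarith [mul_nonneg (hχ u).1 ((hrange u).1.trans (hsub u)),
      mul_nonneg (hχ' u) (hrange u).1]

lemma integral_renewalOp_le (hp : ∀ i, 0 ≤ p i) (hp1 : ∑ i, p i = 1) (hℓ : ∀ i, 0 ≤ ℓ i)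
    (hℓM : ∀ i, ℓ i ≤ lM) (hc : Continuous ψ) (h0 : ∀ u, 0 ≤ ψ u) {a b : ℝ} (hab : a ≤ b) :
    ∫ x in a..b, renewalOp p ℓ ψ x ≤ ∫ x in (a - lM)..b, ψ x := by
  simp only [renewalOp]
  rw [intervalIntegral.integral_finsetSum fun i _ => by
    exact (by fun_prop : Continuous fun x => p i * ψ (x - ℓ i)).intervalIntegrable a b]
  calc ∑ i, ∫ x in a..b, p i * ψ (x - ℓ i) ≤ ∑ i, p i * ∫ x in (a - lM)..b, ψ x := by
        refine Finset.sum_le_sum fun i _ => ?_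
        rw [intervalIntegral.integral_const_mul,
          intervalIntegral.integral_comp_sub_right (fun x => ψ x)]
        refine mul_le_mul_of_nonneg_left ?_ (hp i)
        exact intervalIntegral.integral_mono_interval (by linarith [hℓM i]) (by linarith)
          (by linarith [hℓ i]) (Eventually.of_forall h0) (hc.intervalIntegrable _ _)
    _ = _ := by rw [← Finset.sum_mul, hp1, one_mul]

lemma sum_integral_le_of_le_add_renewalOp (hp : ∀ i, 0 ≤ p i) (hp1 : ∑ i, p i = 1)
    (hℓ : ∀ i, 0 ≤ ℓ i) (hℓM : ∀ i, ℓ i ≤ lM) (hc : Continuous ψ) (h0 : ∀ u, 0 ≤ ψ u)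
    (hhc : Continuous h) {u₁ : ℝ}
    (hle : ∀ u ≤ u₁, h u ≤ ψ u + renewalOp p ℓ ψ u) :
    ∑ i, p i * ∫ x in (u₁ - ℓ i)..u₁, h x ≤ 2 * ∫ x in (u₁ - 2 * lM)..u₁, ψ x := by
  set W := ∫ x in (u₁ - 2 * lM)..u₁, ψ x
  have hwindow : ∀ s ∈ Icc 0 (2 * lM), ∫ x in (u₁ - s)..u₁, ψ x ≤ W := fun s hs =>
    intervalIntegral.integral_mono_interval (by linarith [hs.2]) (by linarith [hs.1]) le_rfl
      (Eventually.of_forall h0) (hc.intervalIntegrable _ _)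
  have hone : ∀ i, ∫ x in (u₁ - ℓ i)..u₁, h x ≤ 2 * W := by
    intro i
    calc ∫ x in (u₁ - ℓ i)..u₁, h x ≤ ∫ x in (u₁ - ℓ i)..u₁, (ψ x + renewalOp p ℓ ψ x) :=
          intervalIntegral.integral_mono_on (by linarith [hℓ i]) (hhc.intervalIntegrable _ _)
            ((hc.add (continuous_renewalOp hc)).intervalIntegrable _ _) fun x hx => hle x hx.2
      _ = (∫ x in (u₁ - ℓ i)..u₁, ψ x) + ∫ x in (u₁ - ℓ i)..u₁, renewalOp p ℓ ψ x :=
          intervalIntegral.integral_add (hc.intervalIntegrable _ _)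
            ((continuous_renewalOp hc).intervalIntegrable _ _)
      _ ≤ W + W := by
          refine add_le_add (hwindow _ ⟨hℓ i, by linarith [hℓ i, hℓM i]⟩) ?_
          refine (integral_renewalOp_le hp hp1 hℓ hℓM hc h0 (by linarith [hℓ i])).trans ?_
          rw [sub_sub]
          exact hwindow _ ⟨by linarith [hℓ i, hℓM i], by linarith [hℓM i]⟩
      _ = 2 * W := (two_mul W).symm
  calc ∑ i, p i * ∫ x in (u₁ - ℓ i)..u₁, h x ≤ ∑ i, p i * (2 * W) :=
        Finset.sum_le_sum fun i _ => mul_le_mul_of_nonneg_left (hone i) (hp i)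
    _ = 2 * W := by rw [← Finset.sum_mul, hp1, one_mul]

theorem tendsto_zero_of_subsolution (hp : ∀ i, 0 < p i) (hp1 : ∑ i, p i = 1)
    (hℓ : ∀ i, 0 < ℓ i) (haper : IsAperiodic ℓ) (hc : Continuous ψ)
    (hrange : ∀ u, ψ u ∈ Icc 0 1) (hsub : ∀ u, ψ u ≤ renewalOp p ℓ ψ u)
    (hmean : ∀ L : ℝ, 0 ≤ L → Tendsto (fun u => ∫ x in (u - L)..u, ψ x) atTop (𝓝 0)) :
    Tendsto ψ atTop (𝓝 0) := by
  have : Nonempty ι := by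
    by_contra hι
    rw [not_nonempty_iff] at hι
    simp at hp1
  obtain ⟨i, hmin⟩ := Finite.exists_min ℓ
  obtain ⟨j, hmax⟩ := Finite.exists_max ℓ
  have hdrift : 0 < ∑ i, p i * ℓ i :=
    Finset.sum_pos (fun i _ => mul_pos (hp i) (hℓ i)) Finset.univ_nonempty
  refine tendsto_order.2 ⟨fun b hb => Eventually.of_forall fun u => hb.trans_le (hrange u).1,
    fun ε hε => ?_⟩
  obtain ⟨u₁, hu₁⟩ := ((hmean (2 * ℓ j) (by linarith [hℓ j])).eventually
    (gt_mem_nhds (half_pos (mul_pos hε hdrift)))).exists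
  obtain ⟨h, hhc, hψh, hh1, hrec, hhle⟩ := exists_renewal_majorant (fun i => (hp i).le) hp1 (hℓ i)
    hmin hc hrange hsub u₁
  have hlimsup : limsup h atTop < ε := by
    refine lt_of_mul_lt_mul_right ?_ hdrift.le
    have := limsup_mul_le_of_renewal hp hp1 (hℓ i) hmin hmax haper hhc
      (fun u => ⟨(hrange u).1.trans (hψh u), hh1 u⟩) hrec
    have := sum_integral_le_of_le_add_renewalOp (fun i => (hp i).le) hp1 (fun i => (hℓ i).le)
      hmax hc (fun u => (hrange u).1) hhc hhle
    linarith
  filter_upwards [eventually_lt_of_limsup_lt hlimsup (isBoundedUnder_of ⟨1, hh1⟩)] with u hu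
  exact (hψh u).trans_lt hu

end Renewal

/-! ### Self-similar measures -/

/-- `ν` is the self-similar probability measure of the contracting similarities
`x ↦ r i * x + t i` with weights `p i`. -/
structure IsSelfSimilar {ι : Type*} [Fintype ι] (r t : ι → ℝ) (p : ι → ℝ≥0∞) (ν : Measure ℝ) :
    Prop where
  isProbabilityMeasure : IsProbabilityMeasure ν
  weight_pos : ∀ i, 0 < p i
  weight_sum : ∑ i, p i = 1
  ratio_pos : ∀ i, 0 < |r i|
  ratio_lt_one : ∀ i, |r i| < 1
  measure_eq : ν = ∑ i, p i • ν.map fun x => r i * x + t i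

lemma eq_of_finite_of_expanding {X : Type*} [PseudoMetricSpace X] {B : Set X} (hB : B.Finite)
    {φ : X → X} (hφ : MapsTo φ B B) {y : X} (hexp : ∀ x ∈ B, x ≠ y → dist x y < dist (φ x) y) :
    ∀ x ∈ B, x = y := by
  by_contra! ⟨x₀, hx₀, hne₀⟩
  obtain ⟨x, ⟨hx, hne⟩, hmax⟩ := exists_max_image {x ∈ B | x ≠ y} (dist · y) (hB.sep _)
    ⟨x₀, hx₀, hne₀⟩
  have hlt := hexp x hx hne
  by_cases hφx : φ x = y
  · rw [hφx, dist_self] at hlt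
    exact absurd hlt dist_nonneg.not_gt
  · exact (hmax _ ⟨hφ hx, hφx⟩).not_gt hlt

lemma infDist_map_le {X : Type*} [PseudoMetricSpace X] {K : Set X} (hne : K.Nonempty) {φ : X → X}
    (hφ : MapsTo φ K K) {C : ℝ} (hC : 0 ≤ C) {x : X}
    (hlip : ∀ y, dist (φ x) (φ y) ≤ C * dist x y) :
    Metric.infDist (φ x) K ≤ C * Metric.infDist x K := by
  have := hne.to_subtype
  rw [Metric.infDist_eq_iInf (x := x), Real.mul_iInf_of_nonneg hC]
  exact le_ciInf fun y => (Metric.infDist_le_dist_of_mem (hφ y.2)).trans (hlip y)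

lemma norm_min_mul_infDist_le_one {X : Type*} [PseudoMetricSpace X] {c : ℝ} (hc : 0 ≤ c) (x : X)
    (K : Set X) : ‖min (c * Metric.infDist x K) 1‖ ≤ 1 := by
  rw [Real.norm_of_nonneg (le_min (mul_nonneg hc Metric.infDist_nonneg) zero_le_one)]
  exact min_le_right _ _

lemma exists_finite_maximal_atoms {α : Type*} [MeasurableSpace α] [MeasurableSingletonClass α]
    (μ : Measure α) [IsFiniteMeasure μ] {x₀ : α} (hx₀ : μ {x₀} ≠ 0) :
    ∃ x₁, (∀ x, μ {x} ≤ μ {x₁}) ∧ {x | μ {x} = μ {x₁}}.Finite := by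
  have hfin : ∀ c : ℝ≥0∞, 0 < c → {x | c ≤ μ {x}}.Finite := fun c hc =>
    Measure.finite_const_le_meas_of_disjoint_iUnion μ hc (fun x => measurableSet_singleton x)
      (fun x y hxy => by simpa using hxy) (measure_ne_top _ _)
  obtain ⟨x₁, hx₁, hmax⟩ := exists_max_image _ (fun x => μ {x}) (hfin _ (pos_iff_ne_zero.2 hx₀))
    ⟨x₀, le_refl (μ {x₀})⟩
  refine ⟨x₁, fun x => ?_, (hfin _ (pos_iff_ne_zero.2 hx₀)).subset fun x hx => hx₁.trans_eq hx.symm⟩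
  rcases le_total (μ {x₀}) (μ {x}) with hx | hx
  · exact hmax x hx
  · exact hx.trans hx₁

namespace IsSelfSimilar

variable {ι : Type*} [Fintype ι] {r t : ι → ℝ} {p : ι → ℝ≥0∞} {ν : Measure ℝ}

lemma weight_ne_top (S : IsSelfSimilar r t p ν) (i : ι) : p i ≠ ∞ :=
  ((Finset.single_le_sum (fun _ _ => zero_le) (Finset.mem_univ i)).trans_lt
    (S.weight_sum.trans_lt ENNReal.one_lt_top)).ne

lemma toReal_weight_pos (S : IsSelfSimilar r t p ν) (i : ι) : 0 < (p i).toReal :=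
  ENNReal.toReal_pos (S.weight_pos i).ne' (S.weight_ne_top i)

lemma sum_toReal_weight (S : IsSelfSimilar r t p ν) : ∑ i, (p i).toReal = 1 := by
  rw [← ENNReal.toReal_sum fun i _ => S.weight_ne_top i, S.weight_sum, ENNReal.toReal_one]

lemma nonempty (S : IsSelfSimilar r t p ν) : Nonempty ι := by
  by_contra hι
  rw [not_nonempty_iff] at hι
  simpa using S.weight_sum

lemma exists_ratio_le (S : IsSelfSimilar r t p ν) : ∃ ρ < 1, ∀ i, |r i| ≤ ρ := by
  have := S.nonempty
  obtain ⟨i, hi⟩ := Finite.exists_max fun i => |r i|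
  exact ⟨|r i|, S.ratio_lt_one i, hi⟩

lemma real_eq (S : IsSelfSimilar r t p ν) {s : Set ℝ} (hs : MeasurableSet s) :
    ν.real s = ∑ i, (p i).toReal * ν.real ((fun x => r i * x + t i) ⁻¹' s) := by
  have := S.isProbabilityMeasure
  have hsum : ν s = ∑ i, p i * ν ((fun x => r i * x + t i) ⁻¹' s) := by
    conv_lhs => rw [S.measure_eq]
    rw [Measure.finsetSum_apply]
    refine Finset.sum_congr rfl fun i _ => ?_
    rw [Measure.smul_apply, smul_eq_mul, Measure.map_apply (by fun_prop) hs]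
  rw [measureReal_def, hsum, ENNReal.toReal_sum fun i _ =>
    ENNReal.mul_ne_top (S.weight_ne_top i) (measure_ne_top _ _)]
  simp only [ENNReal.toReal_mul, measureReal_def]

lemma integral_eq (S : IsSelfSimilar r t p ν) {E : Type*} [NormedAddCommGroup E] [NormedSpace ℝ E]
    [SecondCountableTopology E] {F : ℝ → E} (hF : Continuous F) {C : ℝ} (hC : ∀ x, ‖F x‖ ≤ C) :
    ∫ x, F x ∂ν = ∑ i, (p i).toReal • ∫ x, F (r i * x + t i) ∂ν := by
  have := S.isProbabilityMeasure
  conv_lhs => rw [S.measure_eq]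
  rw [integral_finsetSum_measure fun i _ => (Integrable.of_bound hF.aestronglyMeasurable C
    (Eventually.of_forall hC)).smul_measure (S.weight_ne_top i)]
  refine Finset.sum_congr rfl fun i _ => ?_
  rw [integral_smul_measure, integral_map (by fun_prop) hF.aestronglyMeasurable]

lemma integral_min_infDist_le (S : IsSelfSimilar r t p ν) {K : Set ℝ} (hne : K.Nonempty)
    (hmaps : ∀ i, MapsTo (fun x => r i * x + t i) K K) {ρ : ℝ} (hρ : ∀ i, |r i| ≤ ρ) {c : ℝ}
    (hc : 0 ≤ c) :
    ∫ x, min (c * Metric.infDist x K) 1 ∂ν ≤ ∫ x, min (c * ρ * Metric.infDist x K) 1 ∂ν := by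
  have := S.isProbabilityMeasure
  have hρ0 : 0 ≤ ρ := (abs_nonneg _).trans (hρ S.nonempty.some)
  have hbound : ∀ {c : ℝ}, 0 ≤ c → ∀ x, ‖min (c * Metric.infDist x K) 1‖ ≤ 1 := fun hc x =>
    norm_min_mul_infDist_le_one hc x K
  rw [S.integral_eq (by fun_prop) (hbound hc)]
  calc ∑ i, (p i).toReal • ∫ x, min (c * Metric.infDist (r i * x + t i) K) 1 ∂ν
      ≤ ∑ i, (p i).toReal • ∫ x, min (c * ρ * Metric.infDist x K) 1 ∂ν := by
        refine Finset.sum_le_sum fun i _ => mul_le_mul_of_nonneg_left ?_ ENNReal.toReal_nonneg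
        refine integral_mono (Integrable.of_bound (by fun_prop) 1 (Eventually.of_forall fun x =>
          hbound hc _)) (Integrable.of_bound (by fun_prop) 1 (Eventually.of_forall
          (hbound (mul_nonneg hc hρ0)))) fun x => min_le_min_right _ ?_
        rw [mul_assoc]
        refine mul_le_mul_of_nonneg_left (infDist_map_le hne (hmaps i) hρ0 (fun y => ?_)) hc
        rw [Real.dist_eq, Real.dist_eq, add_sub_add_right_eq_sub, ← mul_sub, abs_mul]
        exact mul_le_mul_of_nonneg_right (hρ i) (abs_nonneg _)
    _ = ∫ x, min (c * ρ * Metric.infDist x K) 1 ∂ν := by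
        rw [← Finset.sum_smul, S.sum_toReal_weight, one_smul]

lemma ae_mem_of_mapsTo (S : IsSelfSimilar r t p ν) {K : Set ℝ} (hK : IsClosed K)
    (hne : K.Nonempty) (hmaps : ∀ i, MapsTo (fun x => r i * x + t i) K K) : ∀ᵐ x ∂ν, x ∈ K := by
  have := S.isProbabilityMeasure
  obtain ⟨ρ, hρ1, hρ⟩ := S.exists_ratio_le
  have hρ0 : 0 ≤ ρ := (abs_nonneg _).trans (hρ S.nonempty.some)
  have hiter : ∀ k : ℕ, ∫ x, min (1 * Metric.infDist x K) 1 ∂ν ≤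
      ∫ x, min (ρ ^ k * Metric.infDist x K) 1 ∂ν := by
    intro k
    induction k with
    | zero => rw [pow_zero]
    | succ k ih =>
      exact ih.trans (S.integral_min_infDist_le hne hmaps hρ (pow_nonneg hρ0 k))
  have hlim : Tendsto (fun k : ℕ => ∫ x, min (ρ ^ k * Metric.infDist x K) 1 ∂ν) atTop
      (𝓝 (∫ _, 0 ∂ν)) := by
    refine tendsto_integral_of_dominated_convergence (fun _ => 1)
      (fun k => (by fun_prop : Continuous _).aestronglyMeasurable) (integrable_const 1)
      (fun k => Eventually.of_forall fun x => norm_min_mul_infDist_le_one (pow_nonneg hρ0 k) x K)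
      (Eventually.of_forall fun x => ?_)
    simpa using ((tendsto_pow_atTop_nhds_zero_of_lt_one hρ0 hρ1).mul_const
      (Metric.infDist x K)).min (tendsto_const_nhds (x := (1 : ℝ)))
  have hnonneg : ∀ x, 0 ≤ min (1 * Metric.infDist x K) 1 := fun x =>
    le_min (mul_nonneg zero_le_one Metric.infDist_nonneg) zero_le_one
  have hzero : ∫ x, min (1 * Metric.infDist x K) 1 ∂ν = 0 := by
    refine le_antisymm ?_ (integral_nonneg hnonneg)
    rw [integral_zero] at hlim
    exact ge_of_tendsto' hlim hiter
  have hae := (integral_eq_zero_iff_of_nonneg hnonneg (Integrable.of_bound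
    (by fun_prop) 1 (Eventually.of_forall fun x => norm_min_mul_infDist_le_one zero_le_one x K))).1
    hzero
  filter_upwards [hae] with x hx
  refine (hK.mem_iff_infDist_zero hne).2 (le_antisymm ?_ Metric.infDist_nonneg)
  by_contra! hpos
  exact (lt_min (by linarith) one_pos : 0 < min (1 * Metric.infDist x K) 1).ne' hx

/-- The finite set of atoms of maximal mass is invariant under the expanding inverse of each of the
maps, hence is contained in the fixed point of each of them. -/
lemma measure_singleton (S : IsSelfSimilar r t p ν)
    (hfix : ∃ i j : ι, ∃ y z : ℝ, r i * y + t i = y ∧ r j * z + t j = z ∧ y ≠ z) (x₀ : ℝ) :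
    ν {x₀} = 0 := by
  have := S.isProbabilityMeasure
  by_contra hx₀
  obtain ⟨x₁, hmax, hfin⟩ := exists_finite_maximal_atoms ν hx₀
  have hr : ∀ i, r i ≠ 0 := fun i => abs_pos.1 (S.ratio_pos i)
  have hpre : ∀ i x, (fun x => r i * x + t i) ⁻¹' {x} = {(x - t i) / r i} := by
    intro i x
    ext y
    rw [mem_preimage, mem_singleton_iff, mem_singleton_iff, eq_div_iff (hr i), eq_sub_iff_add_eq,
      mul_comm y]
  have hmaxr : ∀ x, ν.real {x} ≤ ν.real {x₁} := fun x =>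
    ENNReal.toReal_mono (measure_ne_top _ _) (hmax x)
  have hinv : ∀ i, MapsTo (fun x => (x - t i) / r i) {x | ν {x} = ν {x₁}} {x | ν {x} = ν {x₁}} := by
    intro i x (hx : ν {x} = ν {x₁})
    have hmean : ∑ j, (p j).toReal * ν.real {(x - t j) / r j} =
        ∑ j, (p j).toReal * ν.real {x₁} := by
      simp only [← Finset.sum_mul, S.sum_toReal_weight, one_mul, ← hpre]
      rw [← S.real_eq (measurableSet_singleton x), measureReal_def, hx, measureReal_def]
    have hi := (Finset.sum_eq_sum_iff_of_le fun j _ =>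
      mul_le_mul_of_nonneg_left (hmaxr _) ENNReal.toReal_nonneg).1 hmean i (Finset.mem_univ i)
    exact (ENNReal.toReal_eq_toReal_iff' (measure_ne_top _ _) (measure_ne_top _ _)).1
      (mul_left_cancel₀ (S.toReal_weight_pos i).ne' hi)
  have huniq : ∀ i y, r i * y + t i = y → x₁ = y := by
    intro i y hy
    refine eq_of_finite_of_expanding hfin (hinv i) (fun x _ hxy => ?_) x₁ rfl
    have hdist : (x - t i) / r i - y = (x - y) / r i := by
      rw [div_sub' (hr i)]
      congr 1
      linarith
    rw [Real.dist_eq, Real.dist_eq, hdist, abs_div, lt_div_iff₀ (S.ratio_pos i)]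
    exact mul_lt_of_lt_one_right (abs_pos.2 (sub_ne_zero.2 hxy)) (S.ratio_lt_one i)
  obtain ⟨i, j, y, z, hy, hz, hyz⟩ := hfix
  exact hyz ((huniq i y hy).symm.trans (huniq j z hz))

end IsSelfSimilar

/-! ### Wiener's lemma -/

lemma tendsto_integral_sinc_mul (μ : Measure ℝ) [IsFiniteMeasure μ] (hμ : μ {0} = 0) :
    Tendsto (fun R : ℝ => ∫ x, Real.sinc (R * x) ∂μ) atTop (𝓝 0) := by
  rw [← integral_zero ℝ ℝ (μ := μ)]
  refine tendsto_integral_filter_of_dominated_convergence (fun _ => 1)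
    (Eventually.of_forall fun R => ?_) (Eventually.of_forall fun R => ?_) (integrable_const 1) ?_
  · exact (Real.continuous_sinc.comp (continuous_const_mul R)).aestronglyMeasurable
  · exact Eventually.of_forall fun x => Real.abs_sinc_le_one _
  filter_upwards [measure_eq_zero_iff_ae_notMem.1 hμ] with x (hx : x ≠ 0)
  have hdecay : Tendsto (fun R : ℝ => R⁻¹ * |x|⁻¹) atTop (𝓝 0) := by
    simpa using tendsto_inv_atTop_zero.mul_const (|x|⁻¹)
  refine squeeze_zero_norm' ?_ hdecay
  filter_upwards [eventually_gt_atTop 0] with R hR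
  rw [Real.sinc_of_ne_zero (mul_ne_zero hR.ne' hx), Real.norm_eq_abs, abs_div, abs_mul,
    abs_of_pos hR, ← mul_inv, ← one_div]
  exact div_le_div_of_nonneg_right (Real.abs_sin_le_one _) (by positivity)

section Wiener

variable (ν : Measure ℝ) [IsFiniteMeasure ν]

lemma charFun_map_sub_prod_self (s : ℝ) :
    charFun ((ν.prod ν).map fun z => z.1 - z.2) s = ((‖charFun ν s‖ ^ 2 : ℝ) : ℂ) := by
  have hfactor : charFun ((ν.prod ν).map fun z => z.1 - z.2) s =
      charFun ν s * charFun ν (-s) := by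
    rw [charFun_apply_real, charFun_apply_real, charFun_apply_real,
      integral_map (by fun_prop) (by fun_prop), ← integral_prod_mul]
    refine integral_congr_ae (Eventually.of_forall fun z => ?_)
    simp only
    rw [← Complex.exp_add]
    push_cast
    ring_nf
  rw [hfactor, charFun_neg, Complex.mul_conj, Complex.normSq_eq_norm_sq]

variable {ν}

lemma map_sub_prod_self_singleton_zero (hν : ∀ x, ν {x} = 0) :
    (ν.prod ν).map (fun z => z.1 - z.2) {0} = 0 := by
  have hsub : Measurable fun z : ℝ × ℝ => z.1 - z.2 := by fun_prop
  rw [Measure.map_apply hsub (measurableSet_singleton 0),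
    Measure.measure_prod_null (hsub (measurableSet_singleton 0))]
  refine Eventually.of_forall fun x => ?_
  have hfiber : Prod.mk x ⁻¹' ((fun z : ℝ × ℝ => z.1 - z.2) ⁻¹' {0}) = {x} := by
    ext y
    simp only [mem_preimage, mem_singleton_iff, sub_eq_zero, eq_comm]
  simp only [hfiber, hν x, Pi.zero_apply]

lemma tendsto_mean_sq_norm_charFun (hν : ∀ x, ν {x} = 0) :
    Tendsto (fun R : ℝ => (2 * R)⁻¹ * ∫ s in (-R)..R, ‖charFun ν s‖ ^ 2) atTop (𝓝 0) := by
  refine (tendsto_integral_sinc_mul _ (map_sub_prod_self_singleton_zero hν)).congr' ?_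
  filter_upwards [eventually_gt_atTop 0] with R hR
  have hint := integral_charFun_Icc (μ := (ν.prod ν).map fun z => z.1 - z.2) hR
  simp only [charFun_map_sub_prod_self] at hint
  rw [intervalIntegral.integral_ofReal] at hint
  have hint' : ∫ s in (-R)..R, ‖charFun ν s‖ ^ 2 =
      2 * R * ∫ x, Real.sinc (R * x) ∂(ν.prod ν).map fun z => z.1 - z.2 := by exact_mod_cast hint
  rw [hint', inv_mul_cancel_left₀ (by positivity)]

lemma integral_comp_exp_le {f : ℝ → ℝ} (hf : Continuous f) (hf0 : ∀ s, 0 ≤ f s) {L : ℝ}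
    (hL : 0 ≤ L) (u : ℝ) :
    ∫ x in (u - L)..u, f (Real.exp x) ≤
      2 * Real.exp L * ((2 * Real.exp u)⁻¹ * ∫ s in (-Real.exp u)..(Real.exp u), f s) := by
  have hfe : Continuous fun x => f (Real.exp x) := hf.comp Real.continuous_exp
  calc ∫ x in (u - L)..u, f (Real.exp x)
      ≤ ∫ x in (u - L)..u, Real.exp (L - u) * (f (Real.exp x) * Real.exp x) := by
        refine intervalIntegral.integral_mono_on (by linarith) (hfe.intervalIntegrable _ _)
          ((continuous_const.mul (hfe.mul Real.continuous_exp)).intervalIntegrable _ _) ?_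
        intro x hx
        have hone : 1 ≤ Real.exp (L - u) * Real.exp x := by
          rw [← Real.exp_add]
          exact Real.one_le_exp (by linarith [hx.1])
        nlinarith [hf0 (Real.exp x)]
    _ = Real.exp (L - u) * ∫ s in (Real.exp (u - L))..(Real.exp u), f s := by
        rw [intervalIntegral.integral_const_mul]
        congr 1
        exact intervalIntegral.integral_comp_mul_deriv (fun x _ => Real.hasDerivAt_exp x)
          Real.continuous_exp.continuousOn hf
    _ ≤ Real.exp (L - u) * ∫ s in (-Real.exp u)..(Real.exp u), f s := by
        refine mul_le_mul_of_nonneg_left (intervalIntegral.integral_mono_interval ?_ ?_ le_rfl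
          (Eventually.of_forall hf0) (hf.intervalIntegrable _ _)) (Real.exp_pos _).le
        · linarith [Real.exp_pos u, Real.exp_pos (u - L)]
        · exact Real.exp_le_exp.2 (by linarith)
    _ = 2 * Real.exp L * ((2 * Real.exp u)⁻¹ * ∫ s in (-Real.exp u)..(Real.exp u), f s) := by
        rw [Real.exp_sub]
        field_simp

lemma tendsto_integral_sq_norm_charFun_exp (hν : ∀ x, ν {x} = 0) {L : ℝ} (hL : 0 ≤ L) :
    Tendsto (fun u => ∫ x in (u - L)..u, ‖charFun ν (Real.exp x)‖ ^ 2) atTop (𝓝 0) := by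
  refine squeeze_zero (fun u => intervalIntegral.integral_nonneg (by linarith)
    fun x _ => sq_nonneg _) (fun u => integral_comp_exp_le (continuous_charFun.norm.pow 2)
    (fun s => sq_nonneg _) hL u) ?_
  simpa using ((tendsto_mean_sq_norm_charFun hν).comp Real.tendsto_exp_atTop).const_mul
    (2 * Real.exp L)

end Wiener

/-! ### Fourier decay of self-similar measures -/

lemma fourierTransform_eq_charFun (ν : Measure ℝ) (q : ℝ) :
    fourierTransform ν q = charFun ν (2 * Real.pi * q) := by
  rw [fourierTransform, charFun_apply_real]
  push_cast
  rfl

lemma rajchman_iff {ν : Measure ℝ} :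
    Rajchman ν ↔ ∀ ε > 0, ∃ T > 0, ∀ q, T ≤ |q| → ‖fourierTransform ν q‖ ≤ ε := by
  rw [Rajchman, ← Metric.cobounded_eq_cocompact,
    hasBasis_cobounded_norm.tendsto_iff Metric.nhds_basis_closedBall]
  simp only [true_and, mem_ofPred_eq, Real.norm_eq_abs, mem_closedBall_zero_iff]
  refine forall₂_congr fun ε _ => ⟨fun ⟨T, hT⟩ => ?_, fun ⟨T, _, hT⟩ => ⟨T, hT⟩⟩
  exact ⟨max T 1, by positivity, fun q hq => hT q ((le_max_left _ _).trans hq)⟩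

lemma norm_charFun_abs (ν : Measure ℝ) (s : ℝ) : ‖charFun ν |s|‖ = ‖charFun ν s‖ := by
  rcases abs_choice s with h | h
  · rw [h]
  · rw [h, charFun_neg, RCLike.norm_conj]

namespace IsSelfSimilar

variable {ι : Type*} [Fintype ι] {r t : ι → ℝ} {p : ι → ℝ≥0∞} {ν : Measure ℝ}

lemma charFun_eq (S : IsSelfSimilar r t p ν) (s : ℝ) :
    charFun ν s = ∑ i, (p i).toReal •
      (Complex.exp ((s * t i : ℝ) * Complex.I) * charFun ν (r i * s)) := by
  rw [charFun_apply_real, S.integral_eq (C := 1) (by fun_prop) fun x => by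
    rw [← Complex.ofReal_mul, Complex.norm_exp_ofReal_mul_I]]
  refine Finset.sum_congr rfl fun i _ => ?_
  rw [charFun_apply_real, ← integral_const_mul]
  congr 2
  funext x
  rw [← Complex.exp_add]
  push_cast
  ring_nf

lemma norm_charFun_exp_le (S : IsSelfSimilar r t p ν) (u : ℝ) :
    ‖charFun ν (Real.exp u)‖ ≤
      ∑ i, (p i).toReal * ‖charFun ν (Real.exp (u - -Real.log |r i|))‖ := by
  rw [S.charFun_eq]
  refine (norm_sum_le _ _).trans (Finset.sum_le_sum fun i _ => ?_)
  rw [norm_smul, norm_mul, Complex.norm_exp_ofReal_mul_I, one_mul, Real.norm_eq_abs,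
    abs_of_pos (S.toReal_weight_pos i), sub_neg_eq_add, Real.exp_add,
    Real.exp_log (S.ratio_pos i), ← norm_charFun_abs ν (r i * Real.exp u), abs_mul,
    abs_of_pos (Real.exp_pos u), mul_comm |r i|]

/-- By self-similarity and convexity of the square, `‖charFun ν (exp u)‖ ^ 2` is a subsolution of
the renewal equation with steps `-log |r i|`. -/
lemma tendsto_sq_norm_charFun_exp (S : IsSelfSimilar r t p ν)
    (hfix : ∃ i j : ι, ∃ y z : ℝ, r i * y + t i = y ∧ r j * z + t j = z ∧ y ≠ z)
    (haper : IsAperiodic fun i => Real.log |r i|) :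
    Tendsto (fun u => ‖charFun ν (Real.exp u)‖ ^ 2) atTop (𝓝 0) := by
  have := S.isProbabilityMeasure
  have hle_one : ∀ s, ‖charFun ν s‖ ≤ 1 := fun s => by simpa using norm_charFun_le (μ := ν) s
  refine tendsto_zero_of_subsolution S.toReal_weight_pos S.sum_toReal_weight
    (fun i => neg_pos.2 (Real.log_neg (S.ratio_pos i) (S.ratio_lt_one i))) haper.neg (by fun_prop)
    (fun u => ⟨sq_nonneg _, pow_le_one₀ (norm_nonneg _) (hle_one _)⟩) (fun u => ?_)
    fun L hL => tendsto_integral_sq_norm_charFun_exp (S.measure_singleton hfix) hL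
  calc ‖charFun ν (Real.exp u)‖ ^ 2
      ≤ (∑ i, (p i).toReal * ‖charFun ν (Real.exp (u - -Real.log |r i|))‖) ^ 2 :=
        pow_le_pow_left₀ (norm_nonneg _) (S.norm_charFun_exp_le u) 2
    _ ≤ _ := Real.pow_arith_mean_le_arith_mean_pow _ _ _ (fun i _ => ENNReal.toReal_nonneg)
        S.sum_toReal_weight (fun i _ => norm_nonneg _) 2

lemma rajchman (S : IsSelfSimilar r t p ν)
    (hfix : ∃ i j : ι, ∃ y z : ℝ, r i * y + t i = y ∧ r j * z + t j = z ∧ y ≠ z)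
    (haper : IsAperiodic fun i => Real.log |r i|) : Rajchman ν := by
  have hexp : Tendsto (fun u => ‖charFun ν (Real.exp u)‖) atTop (𝓝 0) := by
    simpa [Real.sqrt_sq] using (S.tendsto_sq_norm_charFun_exp hfix haper).sqrt
  have hfreq : Tendsto (fun q : ℝ => Real.log (2 * Real.pi * |q|)) (cocompact ℝ) atTop :=
    Real.tendsto_log_atTop.comp
      ((tendsto_norm_cocompact_atTop (E := ℝ)).const_mul_atTop Real.two_pi_pos)
  refine squeeze_zero_norm' ?_ (hexp.comp hfreq)
  filter_upwards [(isCompact_singleton (x := (0 : ℝ))).compl_mem_cocompact] with q (hq : q ≠ 0)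
  rw [fourierTransform_eq_charFun, ← norm_charFun_abs, abs_mul, abs_of_pos Real.two_pi_pos,
    Function.comp_apply, Real.exp_log (by positivity)]

end IsSelfSimilar

/-! ### Fourier decay of smooth images -/

section FourierTransformMap

variable (ν : Measure ℝ)

lemma fourierTransform_map {f : ℝ → ℝ} (hf : Measurable f) (q : ℝ) :
    fourierTransform (ν.map f) q =
      ∫ x, Complex.exp (((2 * Real.pi * q * f x : ℝ) : ℂ) * Complex.I) ∂ν :=
  integral_map hf.aemeasurable (by fun_prop)

lemma norm_fourierTransform_map_affine (c d q : ℝ) :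
    ‖fourierTransform (ν.map fun x => d * x + c) q‖ = ‖fourierTransform ν (d * q)‖ := by
  have hphase : ∀ x : ℝ, Complex.exp (((2 * Real.pi * q * (d * x + c) : ℝ) : ℂ) * Complex.I) =
      Complex.exp (((2 * Real.pi * q * c : ℝ) : ℂ) * Complex.I) *
        Complex.exp (((2 * Real.pi * (d * q) * x : ℝ) : ℂ) * Complex.I) := by
    intro x
    rw [← Complex.exp_add]
    push_cast
    ring_nf
  rw [fourierTransform_map ν (by fun_prop), fourierTransform]
  simp only [hphase, integral_const_mul, norm_mul, Complex.norm_exp_ofReal_mul_I, one_mul]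

lemma norm_exp_mul_I_sub_exp_mul_I_le (x y : ℝ) :
    ‖Complex.exp (x * Complex.I) - Complex.exp (y * Complex.I)‖ ≤ |x - y| := by
  have hfactor : Complex.exp (x * Complex.I) - Complex.exp (y * Complex.I) =
      Complex.exp (y * Complex.I) * (Complex.exp (Complex.I * ((x - y : ℝ) : ℂ)) - 1) := by
    rw [mul_sub, ← Complex.exp_add, mul_one]
    push_cast
    ring_nf
  rw [hfactor, norm_mul, Complex.norm_exp_ofReal_mul_I, one_mul]
  exact Real.norm_exp_I_mul_ofReal_sub_one_le

lemma norm_fourierTransform_map_sub_le [IsProbabilityMeasure ν] {u v : ℝ → ℝ} (hu : Measurable u)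
    (hv : Measurable v) {η : ℝ} (huv : ∀ᵐ x ∂ν, |u x - v x| ≤ η) (q : ℝ) :
    ‖fourierTransform (ν.map u) q - fourierTransform (ν.map v) q‖ ≤ 2 * Real.pi * |q| * η := by
  have hint : ∀ {w : ℝ → ℝ}, Measurable w →
      Integrable (fun x => Complex.exp (((2 * Real.pi * q * w x : ℝ) : ℂ) * Complex.I)) ν :=
    fun hw => Integrable.of_bound (by fun_prop) 1
      (Eventually.of_forall fun x => (Complex.norm_exp_ofReal_mul_I _).le)
  rw [fourierTransform_map ν hu, fourierTransform_map ν hv, ← integral_sub (hint hu) (hint hv)]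
  refine (norm_integral_le_of_norm_le_const (C := 2 * Real.pi * |q| * η) ?_).trans_eq (by simp)
  filter_upwards [huv] with x hx
  refine (norm_exp_mul_I_sub_exp_mul_I_le _ _).trans ?_
  rw [← mul_sub, abs_mul, abs_mul, abs_of_pos Real.two_pi_pos]
  gcongr

end FourierTransformMap

section SmoothMap

variable {g : ℝ → ℝ} {a b : ℝ}

lemma exists_forall_abs_sub_sub_deriv_mul_le (hg : ContDiff ℝ 1 g) (a b : ℝ) {η : ℝ}
    (hη : 0 < η) :
    ∃ δ > 0, ∀ x ∈ Icc a b, ∀ y ∈ Icc a b, |x - y| < δ →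
      |g x - g y - deriv g y * (x - y)| ≤ η * |x - y| := by
  obtain ⟨δ, hδ, huc⟩ := Metric.uniformContinuousOn_iff.1
    ((isCompact_Icc (a := a) (b := b)).uniformContinuousOn_of_continuous
      (hg.continuous_deriv le_rfl).continuousOn) η hη
  refine ⟨δ, hδ, fun x hx y hy hxy => ?_⟩
  have hderiv : ∀ z ∈ uIcc y x,
      HasDerivWithinAt (fun z => g z - deriv g y * z) (deriv g z - deriv g y) (uIcc y x) z := by
    intro z _
    have hsub := (hg.differentiable one_ne_zero z).hasDerivAt.sub
      ((hasDerivAt_id z).const_mul (deriv g y))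
    rw [mul_one] at hsub
    exact hsub.hasDerivWithinAt
  have hmvt := (convex_uIcc y x).norm_image_sub_le_of_norm_hasDerivWithin_le hderiv
    (fun z hz => (huc z (ordConnected_Icc.uIcc_subset hy hx hz) y hy
      ((abs_sub_left_of_mem_uIcc hz).trans_lt hxy)).le) left_mem_uIcc right_mem_uIcc
  rw [Real.norm_eq_abs, Real.norm_eq_abs] at hmvt
  convert hmvt using 2
  ring

lemma exists_affine_approx (hg : ContDiff ℝ 1 g) (hab : a ≤ b) {η : ℝ} (hη : 0 < η) :
    ∃ δ > 0, ∀ ρ τ, MapsTo (fun x => ρ * x + τ) (Icc a b) (Icc a b) → |ρ| ≤ δ →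
      ∃ y ∈ Icc a b, ∃ c, ∀ x ∈ Icc a b,
        |g (ρ * x + τ) - (deriv g y * ρ * x + c)| ≤ η * |ρ| := by
  have hL : 0 < b - a + 1 := by linarith
  obtain ⟨δ, hδ, htaylor⟩ := exists_forall_abs_sub_sub_deriv_mul_le hg a b (div_pos hη hL)
  refine ⟨δ / (b - a + 1) / 2, by positivity, fun ρ τ hmaps hρ => ?_⟩
  have ha : a ∈ Icc a b := left_mem_Icc.2 hab
  refine ⟨ρ * a + τ, hmaps ha, g (ρ * a + τ) - deriv g (ρ * a + τ) * ρ * a, fun x hx => ?_⟩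
  have hsub : ρ * x + τ - (ρ * a + τ) = ρ * (x - a) := by ring
  have hdist : |ρ * (x - a)| ≤ |ρ| * (b - a + 1) := by
    rw [abs_mul, abs_of_nonneg (sub_nonneg.2 hx.1)]
    exact mul_le_mul_of_nonneg_left (by linarith [hx.2]) (abs_nonneg _)
  have hsmall : |ρ| * (b - a + 1) < δ := by
    rw [div_div, le_div_iff₀ (by positivity)] at hρ
    nlinarith
  have htaylor_x := htaylor _ (hmaps hx) _ (hmaps ha) (hsub ▸ hdist.trans_lt hsmall)
  rw [hsub] at htaylor_x
  calc |g (ρ * x + τ) - (deriv g (ρ * a + τ) * ρ * x +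
        (g (ρ * a + τ) - deriv g (ρ * a + τ) * ρ * a))|
      = |g (ρ * x + τ) - g (ρ * a + τ) - deriv g (ρ * a + τ) * (ρ * (x - a))| := by
        congr 1
        ring
    _ ≤ η / (b - a + 1) * (|ρ| * (b - a + 1)) := htaylor_x.trans (by gcongr)
    _ = η * |ρ| := by field_simp

lemma exists_pos_le_abs_deriv (hg : ContDiff ℝ 1 g) (hg' : ∀ x ∈ Icc a b, deriv g x ≠ 0) :
    ∃ c > 0, ∀ x ∈ Icc a b, c ≤ |deriv g x| :=
  isCompact_Icc.exists_forall_le' (hg.continuous_deriv le_rfl).abs.continuousOn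
    fun x hx => abs_pos.2 (hg' x hx)

/-- On a copy of `ν` whose size is a large multiple of the wavelength `1 / q`, the map `g` is affine
up to a small fraction of the wavelength. -/
lemma exists_norm_fourierTransform_map_comp_affine_le {ν : Measure ℝ} [IsProbabilityMeasure ν]
    (hν : Rajchman ν) (hsupp : ∀ᵐ x ∂ν, x ∈ Icc a b) (hab : a ≤ b) (hg : ContDiff ℝ 1 g)
    (hg' : ∀ x ∈ Icc a b, deriv g x ≠ 0) {K ε : ℝ} (hK : 0 < K) (hε : 0 < ε) :
    ∃ T > 0, ∃ Q > 0, ∀ q ρ τ, MapsTo (fun x => ρ * x + τ) (Icc a b) (Icc a b) → Q ≤ |q| →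
      T / |q| ≤ |ρ| → |ρ| ≤ K * (T / |q|) →
        ‖fourierTransform (ν.map fun x => g (ρ * x + τ)) q‖ ≤ ε := by
  obtain ⟨c₀, hc₀, hderiv⟩ := exists_pos_le_abs_deriv hg hg'
  obtain ⟨T₀, hT₀, hdecay⟩ := rajchman_iff.1 hν (ε / 2) (half_pos hε)
  set T := T₀ / c₀
  have hT : 0 < T := div_pos hT₀ hc₀
  obtain ⟨δ, hδ, happrox⟩ := exists_affine_approx hg hab
    (by positivity : 0 < ε / (4 * Real.pi * (K * T)))
  refine ⟨T, hT, K * T / δ, by positivity, fun q ρ τ hmaps hQ hlow hupp => ?_⟩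
  have hq : 0 < |q| := lt_of_lt_of_le (by positivity) hQ
  have hρδ : |ρ| ≤ δ := by
    refine hupp.trans ?_
    rw [← mul_div_assoc, div_le_iff₀ hq, mul_comm δ]
    exact (div_le_iff₀ hδ).1 hQ
  obtain ⟨y, hy, c, hlin⟩ := happrox ρ τ hmaps hρδ
  have hmain : ‖fourierTransform (ν.map fun x => deriv g y * ρ * x + c) q‖ ≤ ε / 2 := by
    rw [norm_fourierTransform_map_affine]
    refine hdecay _ ?_
    calc T₀ = c₀ * (T / |q| * |q|) := by rw [div_mul_cancel₀ _ hq.ne', mul_div_cancel₀ _ hc₀.ne']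
      _ ≤ |deriv g y| * (|ρ| * |q|) := by gcongr; exact hderiv y hy
      _ = |deriv g y * ρ * q| := by rw [abs_mul, abs_mul, mul_assoc]
  have herror : 2 * Real.pi * |q| * (ε / (4 * Real.pi * (K * T)) * |ρ|) ≤ ε / 2 := by
    calc 2 * Real.pi * |q| * (ε / (4 * Real.pi * (K * T)) * |ρ|)
        ≤ 2 * Real.pi * |q| * (ε / (4 * Real.pi * (K * T)) * (K * (T / |q|))) := by gcongr
      _ = ε / 2 := by field_simp; norm_num
  have hsub := norm_fourierTransform_map_sub_le ν (u := fun x => g (ρ * x + τ))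
    (hg.continuous.measurable.comp (by fun_prop)) (by fun_prop) (hsupp.mono hlin) q
  linarith [norm_le_norm_add_norm_sub' (fourierTransform (ν.map fun x => g (ρ * x + τ)) q)
    (fourierTransform (ν.map fun x => deriv g y * ρ * x + c) q)]

end SmoothMap

section Branch

variable {ι : Type*} {r t : ι → ℝ}

/-- `Branch r t ρ τ` says that `x ↦ ρ * x + τ` is a finite composition of the maps
`x ↦ r i * x + t i`, so that its image measures are the small copies of a self-similar measure. -/
inductive Branch (r t : ι → ℝ) : ℝ → ℝ → Prop
  | id : Branch r t 1 0
  | comp {ρ τ : ℝ} (h : Branch r t ρ τ) (i : ι) : Branch r t (ρ * r i) (ρ * t i + τ)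

lemma Branch.mapsTo {I : Set ℝ} (hmaps : ∀ i, MapsTo (fun x => r i * x + t i) I I) {ρ τ : ℝ}
    (h : Branch r t ρ τ) : MapsTo (fun x => ρ * x + τ) I I := by
  induction h with
  | id => exact fun x hx => by simpa using hx
  | comp _ i ih =>
    refine (ih.comp (hmaps i)).congr fun x _ => ?_
    simp only [Function.comp_apply]
    ring

end Branch

namespace IsSelfSimilar

variable {ι : Type*} [Fintype ι] {r t : ι → ℝ} {p : ι → ℝ≥0∞} {ν : Measure ℝ}

lemma exists_one_le_mul_ratio (S : IsSelfSimilar r t p ν) : ∃ K > 0, ∀ i, 1 ≤ K * |r i| := by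
  have := S.nonempty
  obtain ⟨i, hi⟩ := Finite.exists_min fun i => |r i|
  refine ⟨|r i|⁻¹, inv_pos.2 (S.ratio_pos i), fun j => ?_⟩
  rw [← inv_mul_cancel₀ (S.ratio_pos i).ne']
  exact mul_le_mul_of_nonneg_left (hi j) (inv_nonneg.2 (abs_nonneg _))

/-- Cut-set principle: the integrals over large branches are convex combinations of the integrals
over the branches whose ratio lies in a fixed window. -/
lemma integral_mem_of_forall_branch (S : IsSelfSimilar r t p ν) {E : Type*} [NormedAddCommGroup E]
    [NormedSpace ℝ E] [SecondCountableTopology E] {s : Set E} (hs : Convex ℝ s) {F : ℝ → E}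
    (hF : Continuous F) {C : ℝ} (hC : ∀ x, ‖F x‖ ≤ C) {K δ : ℝ} (hK : 0 < K)
    (hKr : ∀ i, 1 ≤ K * |r i|) (hδ : 0 < δ)
    (hmem : ∀ ρ τ, Branch r t ρ τ → δ ≤ |ρ| → |ρ| ≤ K * δ → ∫ x, F (ρ * x + τ) ∂ν ∈ s)
    {ρ τ : ℝ} (hB : Branch r t ρ τ) (hρ : δ ≤ |ρ|) : ∫ x, F (ρ * x + τ) ∂ν ∈ s := by
  obtain ⟨κ, hκ1, hκ⟩ := S.exists_ratio_le
  have hκ0 : 0 ≤ κ := (abs_nonneg _).trans (hκ S.nonempty.some)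
  have hdepth : ∀ k : ℕ, ∀ ρ τ, Branch r t ρ τ → δ ≤ |ρ| → |ρ| * κ ^ k ≤ K * δ →
      ∫ x, F (ρ * x + τ) ∂ν ∈ s := by
    intro k
    induction k with
    | zero => exact fun ρ τ hB hρ hk => hmem ρ τ hB hρ (by simpa using hk)
    | succ k ih =>
      intro ρ τ hB hρ hk
      rcases le_or_gt |ρ| (K * δ) with hρK | hρK
      · exact hmem ρ τ hB hρ hρK
      rw [S.integral_eq (F := fun x => F (ρ * x + τ)) (by fun_prop) fun x => hC _]
      refine hs.sum_mem (fun i _ => ENNReal.toReal_nonneg) S.sum_toReal_weight fun i _ => ?_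
      have hchild : ∫ x, F (ρ * r i * x + (ρ * t i + τ)) ∂ν ∈ s := by
        refine ih _ _ (hB.comp i) ?_ ?_
        · rw [abs_mul]
          nlinarith [mul_le_mul_of_nonneg_right hρK.le (abs_nonneg (r i)), hKr i]
        · rw [abs_mul]
          calc |ρ| * |r i| * κ ^ k ≤ |ρ| * κ * κ ^ k := by
                gcongr
                exact hκ i
            _ = |ρ| * κ ^ (k + 1) := by ring
            _ ≤ K * δ := hk
      simpa only [mul_add, mul_assoc, add_assoc] using hchild
  have hlim : Tendsto (fun k : ℕ => |ρ| * κ ^ k) atTop (𝓝 0) := by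
    simpa using (tendsto_pow_atTop_nhds_zero_of_lt_one hκ0 hκ1).const_mul |ρ|
  obtain ⟨k, hk⟩ := (hlim.eventually_le_const (mul_pos hK hδ)).exists
  exact hdepth k ρ τ hB hρ hk

lemma rajchman_map (S : IsSelfSimilar r t p ν) (hν : Rajchman ν) {a b : ℝ} (hab : a ≤ b)
    (hmaps : ∀ i, MapsTo (fun x => r i * x + t i) (Icc a b) (Icc a b)) {g : ℝ → ℝ}
    (hg : ContDiff ℝ 1 g) (hg' : ∀ x ∈ Icc a b, deriv g x ≠ 0) : Rajchman (ν.map g) := by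
  have := S.isProbabilityMeasure
  obtain ⟨K, hK, hKr⟩ := S.exists_one_le_mul_ratio
  refine rajchman_iff.2 fun ε hε => ?_
  have hgc : Continuous g := hg.continuous
  obtain ⟨T, hT, Q, hQ, hsmall⟩ := exists_norm_fourierTransform_map_comp_affine_le hν
    (S.ae_mem_of_mapsTo isClosed_Icc (nonempty_Icc.2 hab) hmaps) hab hg hg' hK hε
  refine ⟨max Q T, by positivity, fun q hq => ?_⟩
  have hq0 : 0 < |q| := hQ.trans_le ((le_max_left _ _).trans hq)
  have hmem := S.integral_mem_of_forall_branch (convex_closedBall (0 : ℂ) ε)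
    (F := fun x => Complex.exp (((2 * Real.pi * q * g x : ℝ) : ℂ) * Complex.I)) (by fun_prop)
    (fun x => (Complex.norm_exp_ofReal_mul_I _).le) hK hKr (div_pos hT hq0)
    (fun ρ τ hB hlow hupp => ?_) Branch.id ?_
  · rw [fourierTransform_map ν hgc.measurable]
    simpa using hmem
  · rw [← fourierTransform_map ν (f := fun x => g (ρ * x + τ))
      (hgc.measurable.comp (by fun_prop)), mem_closedBall_zero_iff]
    exact hsmall q ρ τ (hB.mapsTo hmaps) ((le_max_left _ _).trans hq) hlow hupp
  · rw [abs_one, div_le_one hq0]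
    exact (le_max_right _ _).trans hq

end IsSelfSimilar

/-! ### Exponential moments of multiscale sums -/

section ExponentialMoments

variable {Ω : Type*} [MeasurableSpace Ω] {μ : Measure Ω}

lemma integral_mul_le_of_ae_le_mul [IsProbabilityMeasure μ] {V W : Ω → ℝ} (hV : Integrable V μ)
    (hW : Integrable W μ) (hWV : Integrable (fun x => W x * V x) μ) (hV0 : ∀ x, 0 ≤ V x)
    (hW0 : ∀ x, 0 ≤ W x) {D M : ℝ} (hD : 0 ≤ D) (hosc : ∀ᵐ y ∂μ, ∀ᵐ x ∂μ, W x ≤ D * W y)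
    (hmean : ∫ x, V x ∂μ ≤ M) :
    ∫ x, W x * V x ∂μ ≤ D * M * ∫ x, W x ∂μ := by
  have hpointwise : ∀ᵐ y ∂μ, ∫ x, W x * V x ∂μ ≤ D * M * W y := by
    filter_upwards [hosc] with y hy
    calc ∫ x, W x * V x ∂μ ≤ ∫ x, D * W y * V x ∂μ := by
          refine integral_mono_ae hWV (hV.const_mul _) ?_
          filter_upwards [hy] with x hx
          exact mul_le_mul_of_nonneg_right hx (hV0 x)
      _ = D * W y * ∫ x, V x ∂μ := integral_const_mul _ _
      _ ≤ D * W y * M := mul_le_mul_of_nonneg_left hmean (mul_nonneg hD (hW0 y))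
      _ = D * M * W y := by ring
  calc ∫ x, W x * V x ∂μ = ∫ _, ∫ x, W x * V x ∂μ ∂μ := by simp
    _ ≤ ∫ y, D * M * W y ∂μ := integral_mono_ae (integrable_const _) (hW.const_mul _) hpointwise
    _ = D * M * ∫ x, W x ∂μ := integral_const_mul _ _

lemma mgf_le_exp_of_integral_le [IsProbabilityMeasure μ] {X : Ω → ℝ}
    (hX : AEStronglyMeasurable X μ) (hX1 : ∀ x, |X x| ≤ 1) {ε : ℝ} (hε : 0 ≤ ε)
    (hε1 : ε ≤ 1) (hmean : ∫ x, X x ∂μ ≤ ε) :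
    ProbabilityTheory.mgf X μ ε ≤ Real.exp (2 * ε ^ 2) := by
  have hXint : Integrable X μ := Integrable.of_bound hX 1 (Eventually.of_forall hX1)
  have hpointwise : ∀ x, Real.exp (ε * X x) ≤ ε * X x + (1 + ε ^ 2) := by
    intro x
    have habs : |ε * X x| ≤ ε := by
      rw [abs_mul, abs_of_nonneg hε]
      exact mul_le_of_le_one_right hε (hX1 x)
    have hquad := (abs_le.1 (Real.abs_exp_sub_one_sub_id_le (habs.trans hε1))).2
    have hsq : (ε * X x) ^ 2 ≤ ε ^ 2 := sq_le_sq' (abs_le.1 habs).1 (abs_le.1 habs).2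
    linarith
  calc ProbabilityTheory.mgf X μ ε ≤ ∫ x, (ε * X x + (1 + ε ^ 2)) ∂μ :=
        integral_mono_of_nonneg (Eventually.of_forall fun x => (Real.exp_pos _).le)
          ((hXint.const_mul ε).add (integrable_const _)) (Eventually.of_forall hpointwise)
    _ = ε * ∫ x, X x ∂μ + (1 + ε ^ 2) := by
        rw [integral_add (hXint.const_mul ε) (integrable_const _), integral_const_mul]
        simp
    _ ≤ 2 * ε ^ 2 + 1 := by nlinarith
    _ ≤ Real.exp (2 * ε ^ 2) := Real.add_one_le_exp _

lemma ae_eventually_le_of_mgf_le [IsFiniteMeasure μ] {X : ℕ → Ω → ℝ} {s c η : ℝ} (hs : 0 ≤ s)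
    (hint : ∀ J, Integrable (fun x => Real.exp (s * X J x)) μ)
    (hmgf : ∀ J, ProbabilityTheory.mgf (X J) μ s ≤ Real.exp (c * J)) (hc : c < s * η) :
    ∀ᵐ x ∂μ, ∀ᶠ J : ℕ in atTop, X J x ≤ η * J := by
  have hchernoff : ∀ J : ℕ, μ.real {x | η * J ≤ X J x} ≤ Real.exp (c - s * η) ^ J := by
    intro J
    calc μ.real {x | η * J ≤ X J x}
        ≤ Real.exp (-s * (η * J)) * ProbabilityTheory.mgf (X J) μ s :=
          ProbabilityTheory.measure_ge_le_exp_mul_mgf _ hs (hint J)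
      _ ≤ Real.exp (-s * (η * J)) * Real.exp (c * J) := by gcongr; exact hmgf J
      _ = Real.exp (c - s * η) ^ J := by
          rw [← Real.exp_add, ← Real.exp_nat_mul]
          congr 1
          ring
  have hsummable : Summable fun J : ℕ => Real.exp (c - s * η) ^ J :=
    summable_geometric_of_lt_one (Real.exp_pos _).le (Real.exp_lt_one_iff.2 (by linarith))
  have hfinite : ∑' J : ℕ, μ {x | η * J ≤ X J x} ≠ ∞ := by
    refine ne_top_of_le_ne_top hsummable.tsum_ofReal_ne_top (ENNReal.tsum_le_tsum fun J => ?_)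
    rw [← ofReal_measureReal]
    exact ENNReal.ofReal_le_ofReal (hchernoff J)
  filter_upwards [ae_eventually_notMem hfinite] with x hx
  filter_upwards [hx] with J hJ
  exact (not_le.1 hJ).le

end ExponentialMoments

/-- A sequence of functions living on separate scales: on the copies of `ν` of size about `δ j` the
function `u j` has mean at most `ε`, and on the copies of size at most about `δ (j + 1)` it varies
by at most `ε`. The window for sizes about `δ` is `[δ, K * δ]`. -/
structure IsMultiscale {ι : Type*} (r t : ι → ℝ) (ν : Measure ℝ) (K ε : ℝ) (δ : ℕ → ℝ)
    (u : ℕ → ℝ → ℝ) : Prop where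
  continuous : ∀ j, Continuous (u j)
  abs_le_one : ∀ j x, |u j x| ≤ 1
  scale_pos : ∀ j, 0 < δ j
  scale_antitone : Antitone δ
  integral_le : ∀ j ρ τ, Branch r t ρ τ → δ j ≤ |ρ| → |ρ| ≤ K * δ j →
    ∫ x, u j (ρ * x + τ) ∂ν ≤ ε
  sub_le : ∀ j ρ τ, Branch r t ρ τ → |ρ| ≤ K * δ (j + 1) →
    ∀ᵐ y ∂ν, ∀ᵐ x ∂ν, u j (ρ * x + τ) - u j (ρ * y + τ) ≤ ε

namespace IsMultiscale

variable {ι : Type*} {r t : ι → ℝ} {ν : Measure ℝ} {K ε : ℝ} {δ : ℕ → ℝ} {u : ℕ → ℝ → ℝ}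

lemma shift (H : IsMultiscale r t ν K ε δ u) :
    IsMultiscale r t ν K ε (fun j => δ (j + 1)) fun j => u (j + 1) where
  continuous j := H.continuous (j + 1)
  abs_le_one j := H.abs_le_one (j + 1)
  scale_pos j := H.scale_pos (j + 1)
  scale_antitone _ _ hij := H.scale_antitone (Nat.succ_le_succ hij)
  integral_le j := H.integral_le (j + 1)
  sub_le j := H.sub_le (j + 1)

lemma continuous_exp_sum (H : IsMultiscale r t ν K ε δ u) (J : ℕ) :
    Continuous fun x => Real.exp (ε * ∑ j ∈ Finset.range J, u j x) := by
  have hu := H.continuous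
  fun_prop

lemma norm_exp_sum_le (H : IsMultiscale r t ν K ε δ u) (hε : 0 ≤ ε) (J : ℕ) (x : ℝ) :
    ‖Real.exp (ε * ∑ j ∈ Finset.range J, u j x)‖ ≤ Real.exp (ε * J) := by
  rw [Real.norm_eq_abs, Real.abs_exp, Real.exp_le_exp]
  gcongr
  simpa using Finset.sum_le_sum (s := Finset.range J) fun j _ =>
    (le_abs_self _).trans (H.abs_le_one j x)

lemma integrable_exp_sum [IsFiniteMeasure ν] (H : IsMultiscale r t ν K ε δ u) (hε : 0 ≤ ε) (J : ℕ)
    (ρ τ : ℝ) :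
    Integrable (fun x => Real.exp (ε * ∑ j ∈ Finset.range J, u j (ρ * x + τ))) ν :=
  Integrable.of_bound ((H.continuous_exp_sum J).comp
    (by fun_prop : Continuous fun x => ρ * x + τ)).aestronglyMeasurable (Real.exp (ε * J))
    (Eventually.of_forall fun _ => H.norm_exp_sum_le hε J _)

end IsMultiscale

namespace IsSelfSimilar

variable {ι : Type*} [Fintype ι] {r t : ι → ℝ} {p : ι → ℝ≥0∞} {ν : Measure ℝ} {K : ℝ}

lemma integral_mul_le_of_forall_branch (S : IsSelfSimilar r t p ν) (hK : 0 < K)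
    (hKr : ∀ i, 1 ≤ K * |r i|) {V W : ℝ → ℝ} (hV : Continuous V) (hW : Continuous W)
    (hV0 : ∀ x, 0 ≤ V x) (hW0 : ∀ x, 0 ≤ W x) {A B : ℝ} (hVA : ∀ x, ‖V x‖ ≤ A)
    (hWB : ∀ x, ‖W x‖ ≤ B) {δ D M : ℝ} (hδ : 0 < δ) (hD : 0 ≤ D)
    (hosc : ∀ ρ τ, Branch r t ρ τ → |ρ| ≤ K * δ →
      ∀ᵐ y ∂ν, ∀ᵐ x ∂ν, W (ρ * x + τ) ≤ D * W (ρ * y + τ))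
    (hmean : ∀ ρ τ, Branch r t ρ τ → δ ≤ |ρ| → |ρ| ≤ K * δ → ∫ x, V (ρ * x + τ) ∂ν ≤ M)
    {ρ τ : ℝ} (hB : Branch r t ρ τ) (hρ : δ ≤ |ρ|) :
    ∫ x, W (ρ * x + τ) * V (ρ * x + τ) ∂ν ≤ D * M * ∫ x, W (ρ * x + τ) ∂ν := by
  have := S.isProbabilityMeasure
  have hWVAB : ∀ x, ‖W x * V x‖ ≤ B * A := fun x => by
    rw [norm_mul]
    exact mul_le_mul (hWB x) (hVA x) (norm_nonneg _) ((norm_nonneg _).trans (hWB x))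
  have hint : ∀ {F : ℝ → ℝ}, Continuous F → ∀ {C : ℝ}, (∀ x, ‖F x‖ ≤ C) → ∀ ρ τ,
      Integrable (fun x => F (ρ * x + τ)) ν := fun hF C hC ρ τ =>
    Integrable.of_bound (hF.comp (by fun_prop : Continuous fun x => ρ * x + τ)).aestronglyMeasurable
      C (Eventually.of_forall fun _ => hC _)
  have hWVint : ∀ ρ τ, Integrable (fun x => W (ρ * x + τ) * V (ρ * x + τ)) ν :=
    hint (hW.mul hV) hWVAB
  have hdiff : ∀ ρ τ, ∫ x, (D * M * W (ρ * x + τ) - W (ρ * x + τ) * V (ρ * x + τ)) ∂ν =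
      D * M * ∫ x, W (ρ * x + τ) ∂ν - ∫ x, W (ρ * x + τ) * V (ρ * x + τ) ∂ν := fun ρ τ => by
    rw [integral_sub ((hint hW hWB ρ τ).const_mul _) (hWVint ρ τ), integral_const_mul]
  have hmem := S.integral_mem_of_forall_branch (convex_Ici (0 : ℝ))
    (F := fun x => D * M * W x - W x * V x) (by fun_prop) (C := |D * M| * B + B * A)
    (fun x => (norm_sub_le _ _).trans (add_le_add
      ((norm_mul_le _ _).trans (mul_le_mul_of_nonneg_left (hWB x) (abs_nonneg _))) (hWVAB x)))
    hK hKr hδ (fun ρ τ hB hlow hupp => ?_) hB hρ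
  · rwa [mem_Ici, hdiff, sub_nonneg] at hmem
  · rw [mem_Ici, hdiff, sub_nonneg]
    exact integral_mul_le_of_ae_le_mul (hint hV hVA ρ τ) (hint hW hWB ρ τ) (hWVint ρ τ)
      (fun _ => hV0 _) (fun _ => hW0 _) hD (hosc ρ τ hB hupp) (hmean ρ τ hB hlow hupp)

/-- The terms of a multiscale sum behave like independent, almost centred random variables: the
first term is nearly constant on the copies of `ν` on which the others are averaged. -/
lemma integral_exp_sum_branch_le (S : IsSelfSimilar r t p ν) (hK : 0 < K)
    (hKr : ∀ i, 1 ≤ K * |r i|) {ε : ℝ} (hε : 0 ≤ ε) (hε1 : ε ≤ 1) (J : ℕ) {δ : ℕ → ℝ}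
    {u : ℕ → ℝ → ℝ} (H : IsMultiscale r t ν K ε δ u) {ρ τ : ℝ} (hB : Branch r t ρ τ)
    (hlow : δ 0 ≤ |ρ|) (hupp : |ρ| ≤ K * δ 0) :
    ∫ x, Real.exp (ε * ∑ j ∈ Finset.range J, u j (ρ * x + τ)) ∂ν ≤ Real.exp (3 * ε ^ 2 * J) := by
  have := S.isProbabilityMeasure
  induction J generalizing δ u ρ τ with
  | zero => simp
  | succ J ih =>
    have hu₀ := H.continuous 0
    have hfirst : ∫ x, Real.exp (ε * u 0 (ρ * x + τ)) ∂ν ≤ Real.exp (2 * ε ^ 2) :=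
      mgf_le_exp_of_integral_le (X := fun x => u 0 (ρ * x + τ))
        (by fun_prop : Continuous fun x => u 0 (ρ * x + τ)).aestronglyMeasurable
        (fun x => H.abs_le_one 0 _) hε hε1 (H.integral_le 0 ρ τ hB hlow hupp)
    calc ∫ x, Real.exp (ε * ∑ j ∈ Finset.range (J + 1), u j (ρ * x + τ)) ∂ν
        = ∫ x, Real.exp (ε * u 0 (ρ * x + τ)) *
            Real.exp (ε * ∑ j ∈ Finset.range J, u (j + 1) (ρ * x + τ)) ∂ν := by
          simp only [Finset.sum_range_succ', mul_add, Real.exp_add, mul_comm]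
      _ ≤ Real.exp (ε ^ 2) * Real.exp (3 * ε ^ 2 * J) *
            ∫ x, Real.exp (ε * u 0 (ρ * x + τ)) ∂ν := by
          refine S.integral_mul_le_of_forall_branch hK hKr (H.shift.continuous_exp_sum J)
            (by fun_prop) (W := fun x => Real.exp (ε * u 0 x)) (fun _ => (Real.exp_pos _).le)
            (fun _ => (Real.exp_pos _).le) (H.shift.norm_exp_sum_le hε J)
            (fun x => by simpa only [Finset.sum_range_one] using H.norm_exp_sum_le hε 1 x)
            (H.scale_pos 1) (Real.exp_pos _).le (fun ρ τ hB hρ => ?_)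
            (fun ρ τ hB hlow hupp => ih H.shift hB hlow hupp) hB
            ((H.scale_antitone zero_le_one).trans hlow)
          filter_upwards [H.sub_le 0 ρ τ hB hρ] with y hy
          filter_upwards [hy] with x hx
          rw [← Real.exp_add, Real.exp_le_exp]
          nlinarith
      _ ≤ Real.exp (ε ^ 2) * Real.exp (3 * ε ^ 2 * J) * Real.exp (2 * ε ^ 2) := by gcongr
      _ = Real.exp (3 * ε ^ 2 * (J + 1 : ℕ)) := by
          rw [← Real.exp_add, ← Real.exp_add]
          congr 1
          push_cast
          ring

lemma mgf_sum_le (S : IsSelfSimilar r t p ν) (hK : 0 < K) (hKr : ∀ i, 1 ≤ K * |r i|) {ε : ℝ}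
    (hε : 0 ≤ ε) (hε1 : ε ≤ 1) {δ : ℕ → ℝ} {u : ℕ → ℝ → ℝ} (H : IsMultiscale r t ν K ε δ u)
    (hδ1 : δ 0 ≤ 1) (J : ℕ) :
    ProbabilityTheory.mgf (fun x => ∑ j ∈ Finset.range J, u j x) ν ε ≤
      Real.exp (3 * ε ^ 2 * J) := by
  have hmem := S.integral_mem_of_forall_branch (convex_Iic (Real.exp (3 * ε ^ 2 * J)))
    (H.continuous_exp_sum J) (H.norm_exp_sum_le hε J) hK hKr (H.scale_pos 0)
    (fun ρ τ hB hlow hupp => S.integral_exp_sum_branch_le hK hKr hε hε1 J H hB hlow hupp)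
    Branch.id (by simpa using hδ1)
  simp only [one_mul, add_zero, mem_Iic] at hmem
  exact hmem

lemma ae_eventually_sum_le (S : IsSelfSimilar r t p ν) (hK : 0 < K) (hKr : ∀ i, 1 ≤ K * |r i|)
    {ε : ℝ} (hε : 0 < ε) (hε1 : ε ≤ 1) {δ : ℕ → ℝ} {u : ℕ → ℝ → ℝ}
    (H : IsMultiscale r t ν K ε δ u) (hδ1 : δ 0 ≤ 1) :
    ∀ᵐ x ∂ν, ∀ᶠ J : ℕ in atTop, ∑ j ∈ Finset.range J, u j x ≤ 4 * ε * J := by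
  have := S.isProbabilityMeasure
  refine ae_eventually_le_of_mgf_le hε.le (fun J => ?_) (S.mgf_sum_le hK hKr hε.le hε1 H hδ1)
    (by nlinarith)
  simpa only [one_mul, add_zero] using H.integrable_exp_sum hε.le J 1 0

end IsSelfSimilar

/-! ### Cosine sums along lacunary frequencies -/

/-- Along every sufficiently lacunary sequence of frequencies, the cosine sums at almost every point
are small compared with their length. The lacunarity required does not depend on the phase `α`. -/
def HasSmallLacunarySums (μ : Measure ℝ) : Prop :=
  ∀ ε > 0, ∃ B Q : ℝ, ∀ q : ℕ → ℝ, Q ≤ q 0 → (∀ j, B * q j ≤ q (j + 1)) → ∀ α : ℝ,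
    ∀ᵐ y ∂μ, ∀ᶠ J : ℕ in atTop,
      ∑ j ∈ Finset.range J, Real.cos (2 * Real.pi * q j * y + α) ≤ ε * J

lemma measurableSet_setOf_eventually_atTop {Ω : Type*} [MeasurableSpace Ω] {P : ℕ → Ω → Prop}
    (hP : ∀ n, MeasurableSet {x | P n x}) : MeasurableSet {x | ∀ᶠ n in atTop, P n x} := by
  convert MeasurableSet.measurableSet_liminf hP using 1
  ext x
  exact mem_liminf_iff_eventually_mem.symm

lemma monotone_of_mul_le_succ {B : ℝ} (hB : 1 ≤ B) {q : ℕ → ℝ} (hq0 : 0 < q 0)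
    (hq : ∀ j, B * q j ≤ q (j + 1)) : Monotone q := by
  have hstep : ∀ j, 0 < q j → q j ≤ q (j + 1) := fun j hj =>
    (le_mul_of_one_le_left hj.le hB).trans (hq j)
  have hpos : ∀ j, 0 < q j := fun j => by
    induction j with
    | zero => exact hq0
    | succ j ih => exact ih.trans_le (hstep j ih)
  exact monotone_nat_of_le_succ fun j => hstep j (hpos j)

lemma integral_cos_le_norm_fourierTransform (μ : Measure ℝ) [IsFiniteMeasure μ] (q α : ℝ) :
    ∫ y, Real.cos (2 * Real.pi * q * y + α) ∂μ ≤ ‖fourierTransform μ q‖ := by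
  have hint : Integrable
      (fun y => Complex.exp (((2 * Real.pi * q * y + α : ℝ) : ℂ) * Complex.I)) μ :=
    Integrable.of_bound (by fun_prop) 1
      (Eventually.of_forall fun y => (Complex.norm_exp_ofReal_mul_I _).le)
  have hphase : ∫ y, Complex.exp (((2 * Real.pi * q * y + α : ℝ) : ℂ) * Complex.I) ∂μ =
      fourierTransform μ q * Complex.exp (α * Complex.I) := by
    rw [fourierTransform, ← integral_mul_const]
    refine integral_congr_ae (Eventually.of_forall fun y => ?_)
    simp only [← Complex.exp_add, Complex.ofReal_add, add_mul]
  calc ∫ y, Real.cos (2 * Real.pi * q * y + α) ∂μ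
      = (∫ y, Complex.exp (((2 * Real.pi * q * y + α : ℝ) : ℂ) * Complex.I) ∂μ).re := by
        simpa only [RCLike.re_to_complex, Complex.exp_ofReal_mul_I_re] using integral_re hint
    _ ≤ ‖fourierTransform μ q‖ := by
        refine (Complex.re_le_norm _).trans_eq ?_
        rw [hphase, norm_mul, Complex.norm_exp_ofReal_mul_I, mul_one]

lemma cos_sub_cos_le_of_lipschitzOnWith {g : ℝ → ℝ} {M : NNReal} {a b : ℝ}
    (hg : LipschitzOnWith M g (Icc a b)) {q : ℝ} (hq : 0 ≤ q) (α : ℝ) {ρ τ x y : ℝ}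
    (hmaps : MapsTo (fun x => ρ * x + τ) (Icc a b) (Icc a b)) (hx : x ∈ Icc a b)
    (hy : y ∈ Icc a b) :
    Real.cos (2 * Real.pi * q * g (ρ * x + τ) + α) - Real.cos (2 * Real.pi * q * g (ρ * y + τ) + α)
      ≤ 2 * Real.pi * M * (b - a) * (q * |ρ|) := by
  have hgxy : |g (ρ * x + τ) - g (ρ * y + τ)| ≤ M * (|ρ| * (b - a)) := by
    calc |g (ρ * x + τ) - g (ρ * y + τ)| ≤ M * |ρ * x + τ - (ρ * y + τ)| := by
          simpa only [Real.dist_eq] using hg.dist_le_mul _ (hmaps hx) _ (hmaps hy)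
      _ = M * (|ρ| * |x - y|) := by rw [add_sub_add_right_eq_sub, ← mul_sub, abs_mul]
      _ ≤ M * (|ρ| * (b - a)) := by
          gcongr
          exact abs_sub_le_of_le_of_le hx.1 hx.2 hy.1 hy.2
  calc Real.cos (2 * Real.pi * q * g (ρ * x + τ) + α) -
        Real.cos (2 * Real.pi * q * g (ρ * y + τ) + α)
      ≤ |2 * Real.pi * q * g (ρ * x + τ) + α - (2 * Real.pi * q * g (ρ * y + τ) + α)| :=
        (le_abs_self _).trans (Real.abs_cos_sub_cos_le _ _)
    _ = 2 * Real.pi * q * |g (ρ * x + τ) - g (ρ * y + τ)| := by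
        rw [add_sub_add_right_eq_sub, ← mul_sub, abs_mul,
          abs_of_nonneg (by positivity : 0 ≤ 2 * Real.pi * q)]
    _ ≤ 2 * Real.pi * q * (M * (|ρ| * (b - a))) := by gcongr
    _ = 2 * Real.pi * M * (b - a) * (q * |ρ|) := by ring

lemma isMultiscale_cos {ι : Type*} {r t : ι → ℝ} {ν : Measure ℝ} [IsFiniteMeasure ν] {a b : ℝ}
    (hmaps : ∀ i, MapsTo (fun x => r i * x + t i) (Icc a b) (Icc a b))
    (hsupp : ∀ᵐ x ∂ν, x ∈ Icc a b) {g : ℝ → ℝ} (hg : Continuous g) (hab : a ≤ b) {M : NNReal}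
    (hM : LipschitzOnWith M g (Icc a b)) {K T Q ε : ℝ} (hT : 0 < T) (hε : 0 < ε)
    (hsmall : ∀ q ρ τ, MapsTo (fun x => ρ * x + τ) (Icc a b) (Icc a b) → Q ≤ |q| →
      T / |q| ≤ |ρ| → |ρ| ≤ K * (T / |q|) →
        ‖fourierTransform (ν.map fun x => g (ρ * x + τ)) q‖ ≤ ε)
    {B : ℝ} (hB1 : 1 ≤ B) (hB : 2 * Real.pi * M * (b - a) * (K * T) / ε ≤ B) {q : ℕ → ℝ}
    (hq0 : 0 < q 0) (hqQ : Q ≤ q 0) (hq : ∀ j, B * q j ≤ q (j + 1)) (α : ℝ) :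
    IsMultiscale r t ν K ε (fun j => T / q j)
      fun j x => Real.cos (2 * Real.pi * q j * g x + α) := by
  have hmono : Monotone q := monotone_of_mul_le_succ hB1 hq0 hq
  have hpos : ∀ j, 0 < q j := fun j => hq0.trans_le (hmono j.zero_le)
  refine ⟨fun j => by fun_prop, fun j x => Real.abs_cos_le_one _, fun j => div_pos hT (hpos j),
    fun i j hij => div_le_div_of_nonneg_left hT.le (hpos i) (hmono hij),
    fun j ρ τ hBr hlow hupp => ?_, fun j ρ τ hBr hρ => ?_⟩
  · have hcos := integral_cos_le_norm_fourierTransform (ν.map fun x => g (ρ * x + τ)) (q j) α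
    rw [integral_map (by fun_prop) (by fun_prop)] at hcos
    rw [← abs_of_pos (hpos j)] at hlow hupp
    refine hcos.trans (hsmall (q j) ρ τ (hBr.mapsTo hmaps) ?_ hlow hupp)
    exact (hqQ.trans (hmono j.zero_le)).trans (le_abs_self _)
  · filter_upwards [hsupp] with y hy
    filter_upwards [hsupp] with x hx
    refine (cos_sub_cos_le_of_lipschitzOnWith hM (hpos j).le α (hBr.mapsTo hmaps) hx hy).trans ?_
    have : 0 ≤ b - a := sub_nonneg.2 hab
    have hqB : q j / q (j + 1) * B ≤ 1 := by
      rw [div_mul_eq_mul_div, div_le_one (hpos _), mul_comm]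
      exact hq j
    calc 2 * Real.pi * M * (b - a) * (q j * |ρ|)
        ≤ 2 * Real.pi * M * (b - a) * (q j * (K * (T / q (j + 1)))) := by
          have := (hpos j).le
          gcongr
      _ = q j / q (j + 1) * (2 * Real.pi * M * (b - a) * (K * T) / ε) * ε := by
          field_simp
      _ ≤ q j / q (j + 1) * B * ε := by
          have := (hpos j).le
          have := (hpos (j + 1)).le
          gcongr
      _ ≤ ε := mul_le_of_le_one_left hε.le hqB

lemma IsSelfSimilar.hasSmallLacunarySums_map {ι : Type*} [Fintype ι] {r t : ι → ℝ} {p : ι → ℝ≥0∞}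
    {ν : Measure ℝ} (S : IsSelfSimilar r t p ν) (hν : Rajchman ν) {a b : ℝ} (hab : a ≤ b)
    (hmaps : ∀ i, MapsTo (fun x => r i * x + t i) (Icc a b) (Icc a b)) {g : ℝ → ℝ}
    (hg : ContDiff ℝ 1 g) (hg' : ∀ x ∈ Icc a b, deriv g x ≠ 0) :
    HasSmallLacunarySums (ν.map g) := by
  intro ε hε
  have := S.isProbabilityMeasure
  have hgc : Continuous g := hg.continuous
  have hη : 0 < min (ε / 4) 1 := by positivity
  have hηε : 4 * min (ε / 4) 1 ≤ ε := by linarith [min_le_left (ε / 4) 1]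
  set η := min (ε / 4) 1
  have hsupp := S.ae_mem_of_mapsTo isClosed_Icc (nonempty_Icc.2 hab) hmaps
  obtain ⟨K, hK, hKr⟩ := S.exists_one_le_mul_ratio
  obtain ⟨T, hT, Q, hQ, hsmall⟩ :=
    exists_norm_fourierTransform_map_comp_affine_le hν hsupp hab hg hg' hK hη
  obtain ⟨M, hM⟩ :=
    hg.contDiffOn.exists_lipschitzOnWith one_ne_zero (convex_Icc a b) isCompact_Icc
  refine ⟨max 1 (2 * Real.pi * M * (b - a) * (K * T) / η), max Q T, fun q hq0 hq α => ?_⟩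
  have hq0' : 0 < q 0 := hQ.trans_le ((le_max_left _ _).trans hq0)
  have H := isMultiscale_cos hmaps hsupp hgc hab hM hT hη hsmall (le_max_left _ _)
    (le_max_right _ _) hq0' ((le_max_left _ _).trans hq0) hq α
  rw [ae_map_iff hgc.aemeasurable]
  · filter_upwards [S.ae_eventually_sum_le hK hKr hη (min_le_right _ _) H
      ((div_le_one hq0').2 ((le_max_right _ _).trans hq0))] with x hx
    filter_upwards [hx] with J hJ
    exact hJ.trans (mul_le_mul_of_nonneg_right hηε J.cast_nonneg)
  · exact measurableSet_setOf_eventually_atTop fun J => measurableSet_le (by fun_prop) (by fun_prop)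

/-! ### Averages along arithmetic progressions of indices -/

section ResidueClasses

variable {d : ℕ → ℝ}

lemma sum_range_mul_eq_sum_residues (d : ℕ → ℝ) (m J : ℕ) :
    ∑ k ∈ Finset.range (J * m), d k =
      ∑ c ∈ Finset.range m, ∑ j ∈ Finset.range J, d (j * m + c) := by
  induction J with
  | zero => simp
  | succ J ih =>
    simp only [Finset.sum_range_succ, Finset.sum_add_distrib]
    rw [Nat.succ_mul, Finset.sum_range_add, ih]

lemma eventually_sum_range_le_of_residues (hd : ∀ k, d k ≤ 1) {m : ℕ} (hm : 0 < m) {ε : ℝ}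
    (hε : 0 ≤ ε)
    (H : ∀ c, ∀ᶠ J : ℕ in atTop, ∑ j ∈ Finset.range J, d (j * m + c) ≤ ε * J) :
    ∀ᶠ N : ℕ in atTop, ∑ k ∈ Finset.range N, d k ≤ ε * N + m := by
  have hall : ∀ᶠ J : ℕ in atTop, ∀ c ∈ Finset.range m,
      ∑ j ∈ Finset.range J, d (j * m + c) ≤ ε * J :=
    (Filter.eventually_all_finset _).2 fun c _ => H c
  filter_upwards [(Nat.tendsto_div_const_atTop hm.ne').eventually hall] with N hN
  have hsplit : N / m * m + N % m = N := Nat.div_add_mod' N m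
  have hblocks : ∑ k ∈ Finset.range (N / m * m), d k ≤ ε * N := by
    calc ∑ k ∈ Finset.range (N / m * m), d k ≤ ∑ _c ∈ Finset.range m, ε * (N / m : ℕ) :=
          (sum_range_mul_eq_sum_residues d m _).trans_le (Finset.sum_le_sum hN)
      _ = ε * (N / m * m : ℕ) := by
          rw [Finset.sum_const, Finset.card_range, nsmul_eq_mul]
          push_cast
          ring
      _ ≤ ε * N := by gcongr; exact Nat.div_mul_le_self N m
  have hrest : ∑ k ∈ Finset.range (N % m), d (N / m * m + k) ≤ m := by
    calc ∑ k ∈ Finset.range (N % m), d (N / m * m + k) ≤ ∑ _k ∈ Finset.range (N % m), (1 : ℝ) :=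
          Finset.sum_le_sum fun k _ => hd _
      _ ≤ m := by simpa using (Nat.mod_lt N hm).le
  calc ∑ k ∈ Finset.range N, d k
      = ∑ k ∈ Finset.range (N / m * m), d k + ∑ k ∈ Finset.range (N % m), d (N / m * m + k) := by
        rw [← Finset.sum_range_add, hsplit]
    _ ≤ ε * N + m := add_le_add hblocks hrest

lemma eventually_sum_range_le_of_shift (hd : ∀ k, d k ≤ 1) (a : ℕ) {ε C : ℝ} (hε : 0 ≤ ε)
    (H : ∀ᶠ N : ℕ in atTop, ∑ k ∈ Finset.range N, d (a + k) ≤ ε * N + C) :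
    ∀ᶠ N : ℕ in atTop, ∑ k ∈ Finset.range N, d k ≤ ε * N + (C + a) := by
  filter_upwards [(tendsto_sub_atTop_nat a).eventually H, eventually_ge_atTop a] with N hN haN
  have hinit : ∑ k ∈ Finset.range a, d k ≤ a := by
    simpa using Finset.sum_le_sum (s := Finset.range a) fun k _ => hd k
  have hcast : ((N - a : ℕ) : ℝ) ≤ N := by exact_mod_cast Nat.sub_le N a
  calc ∑ k ∈ Finset.range N, d k
      = ∑ k ∈ Finset.range a, d k + ∑ k ∈ Finset.range (N - a), d (a + k) := by
        rw [← Finset.sum_range_add, Nat.add_sub_cancel' haN]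
    _ ≤ a + (ε * (N - a : ℕ) + C) := add_le_add hinit hN
    _ ≤ ε * N + (C + a) := by linarith [mul_le_mul_of_nonneg_left hcast hε]

lemma eventually_le_mul_of_le_mul_add {S : ℕ → ℝ} {ε ε' C : ℝ} (hε : ε < ε')
    (H : ∀ᶠ N : ℕ in atTop, S N ≤ ε * N + C) : ∀ᶠ N : ℕ in atTop, S N ≤ ε' * N := by
  have hlarge : Tendsto (fun N : ℕ => (ε' - ε) * N) atTop atTop :=
    tendsto_natCast_atTop_atTop.const_mul_atTop (sub_pos.2 hε)
  filter_upwards [H, hlarge.eventually_ge_atTop C] with N hN hC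
  linarith

end ResidueClasses

/-- A geometric sequence of frequencies need not be lacunary enough, but its restrictions to the
residue classes of a large modulus are. -/
lemma HasSmallLacunarySums.ae_eventually_sum_cos_le {μ : Measure ℝ} (hμ : HasSmallLacunarySums μ)
    {b c : ℝ} (hb : 1 < b) (hc : 0 < c) (α : ℝ) {ε : ℝ} (hε : 0 < ε) :
    ∀ᵐ y ∂μ, ∀ᶠ N : ℕ in atTop,
      ∑ k ∈ Finset.range N, Real.cos (2 * Real.pi * (c * b ^ k) * y + α) ≤ ε * N := by
  obtain ⟨B, Q, hBQ⟩ := hμ (ε / 2) (half_pos hε)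
  obtain ⟨m, hm⟩ := pow_unbounded_of_one_lt B hb
  obtain ⟨a, ha⟩ := pow_unbounded_of_one_lt (Q / c) hb
  have : 0 < b := zero_lt_one.trans hb
  have hresidues : ∀ᵐ y ∂μ, ∀ s : ℕ, ∀ᶠ J : ℕ in atTop, ∑ j ∈ Finset.range J,
      Real.cos (2 * Real.pi * (c * b ^ (a + (j * (m + 1) + s))) * y + α) ≤ ε / 2 * J := by
    refine ae_all_iff.2 fun s => hBQ (fun j => c * b ^ (a + (j * (m + 1) + s))) ?_ (fun j => ?_) α
    · calc Q ≤ c * b ^ a := by rw [← div_le_iff₀' hc]; exact ha.le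
        _ ≤ c * b ^ (a + (0 * (m + 1) + s)) := by
          gcongr
          · exact hb.le
          · exact Nat.le_add_right _ _
    · calc B * (c * b ^ (a + (j * (m + 1) + s)))
          ≤ b ^ (m + 1) * (c * b ^ (a + (j * (m + 1) + s))) := by
            gcongr
            exact hm.le.trans (pow_le_pow_right₀ hb.le m.le_succ)
        _ = c * b ^ (a + ((j + 1) * (m + 1) + s)) := by ring
  filter_upwards [hresidues] with y hy
  exact eventually_le_mul_of_le_mul_add (half_lt_self hε)
    (eventually_sum_range_le_of_shift (fun k => Real.cos_le_one _) a (half_pos hε).le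
      (eventually_sum_range_le_of_residues (fun k => Real.cos_le_one _) m.succ_pos
        (half_pos hε).le hy))

/-! ### Weyl's criterion and normality -/

lemma tendsto_zero_of_mem_closure_span {E : Type*} [NormedAddCommGroup E] [NormedSpace ℂ E]
    {Λ : ℕ → E →ₗ[ℂ] ℂ} {C : ℝ} (hΛ : ∀ N x, ‖Λ N x‖ ≤ C * ‖x‖) {s : Set E}
    (hs : ∀ x ∈ s, Tendsto (fun N => Λ N x) atTop (𝓝 0)) {x : E}
    (hx : x ∈ (Submodule.span ℂ s).topologicalClosure) :
    Tendsto (fun N => Λ N x) atTop (𝓝 0) := by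
  have hspan : ∀ y ∈ Submodule.span ℂ s, Tendsto (fun N => Λ N y) atTop (𝓝 0) := fun y hy => by
    induction hy using Submodule.span_induction with
    | mem y hy => exact hs y hy
    | zero => simp
    | add y z _ _ ihy ihz => simpa using ihy.add ihz
    | smul c y _ ih => simpa using ih.const_mul c
  rw [Metric.tendsto_nhds]
  intro ε hε
  obtain ⟨y, hy, hxy⟩ := Metric.mem_closure_iff.1 hx (ε / (2 * (|C| + 1))) (by positivity)
  filter_upwards [(Metric.tendsto_nhds.1 (hspan y hy)) (ε / 2) (half_pos hε)] with N hN
  rw [dist_zero_right] at hN ⊢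
  calc ‖Λ N x‖ = ‖Λ N (x - y) + Λ N y‖ := by rw [← map_add, sub_add_cancel]
    _ ≤ ‖Λ N (x - y)‖ + ‖Λ N y‖ := norm_add_le _ _
    _ ≤ (|C| + 1) * ‖x - y‖ + ‖Λ N y‖ := by
        gcongr
        refine (hΛ N _).trans (mul_le_mul_of_nonneg_right ?_ (norm_nonneg _))
        linarith [le_abs_self C]
    _ < ε / 2 + ε / 2 := by
        refine add_lt_add ?_ hN
        rw [dist_eq_norm, lt_div_iff₀ (by positivity)] at hxy
        linarith
    _ = ε := add_halves ε

/-- The difference between the average of `f` over `z 0, …, z (N - 1)` and the integral of `f`, as a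
linear functional of `f`: the sequence `z` equidistributes if it tends to zero for every `f`. -/
def averagingError (z : ℕ → UnitAddCircle) (N : ℕ) : C(UnitAddCircle, ℂ) →ₗ[ℂ] ℂ where
  toFun f := (N : ℂ)⁻¹ * ∑ k ∈ Finset.range N, f (z k) - ∫ x, f x
  map_add' f g := by
    have hint : ∀ f : C(UnitAddCircle, ℂ), Integrable f := fun f =>
      f.continuous.integrable_of_hasCompactSupport (HasCompactSupport.of_compactSpace _)
    simp only [ContinuousMap.add_apply, Finset.sum_add_distrib, integral_add (hint f) (hint g)]
    ring
  map_smul' c f := by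
    simp only [ContinuousMap.smul_apply, smul_eq_mul, ← Finset.mul_sum, integral_const_mul,
      RingHom.id_apply]
    ring

lemma averagingError_apply (z : ℕ → UnitAddCircle) (N : ℕ) (f : C(UnitAddCircle, ℂ)) :
    averagingError z N f = (N : ℂ)⁻¹ * ∑ k ∈ Finset.range N, f (z k) - ∫ x, f x := rfl

lemma norm_averagingError_le (z : ℕ → UnitAddCircle) (N : ℕ) (f : C(UnitAddCircle, ℂ)) :
    ‖averagingError z N f‖ ≤ 2 * ‖f‖ := by
  have hmean : ‖(N : ℂ)⁻¹ * ∑ k ∈ Finset.range N, f (z k)‖ ≤ ‖f‖ := by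
    have hsum : ‖∑ k ∈ Finset.range N, f (z k)‖ ≤ N * ‖f‖ := by
      simpa using norm_sum_le_of_le (Finset.range N) fun k _ => f.norm_coe_le_norm (z k)
    rw [norm_mul, norm_inv, Complex.norm_natCast]
    exact inv_mul_le_of_le_mul₀ N.cast_nonneg (norm_nonneg _) hsum
  have hintegral : ‖∫ x, f x‖ ≤ ‖f‖ := by
    simpa [measureReal_def] using
      norm_integral_le_of_norm_le_const (μ := (volume : Measure UnitAddCircle))
        (Eventually.of_forall f.norm_coe_le_norm)
  rw [averagingError_apply]
  linarith [norm_sub_le ((N : ℂ)⁻¹ * ∑ k ∈ Finset.range N, f (z k)) (∫ x, f x)]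

lemma integral_fourier_eq_zero {n : ℤ} (hn : n ≠ 0) : ∫ x : UnitAddCircle, fourier n x = 0 := by
  have h := congrFun (fourierCoeff_fourier (T := 1) n) 0
  rw [Pi.single_eq_of_ne hn.symm, fourierCoeff, AddCircle.integral_haarAddCircle] at h
  simpa [fourier_zero, -fourier_apply] using h

lemma averagingError_fourier_neg (z : ℕ → UnitAddCircle) (N : ℕ) {n : ℤ} (hn : n ≠ 0) :
    averagingError z N (fourier (-n)) =
      (starRingEnd ℂ) (averagingError z N (fourier n)) := by
  rw [averagingError_apply, averagingError_apply, integral_fourier_eq_zero hn,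
    integral_fourier_eq_zero (neg_ne_zero.2 hn)]
  simp [fourier_neg, -fourier_apply]

lemma tendsto_averagingError_fourier {z : ℕ → UnitAddCircle}
    (hz : ∀ n : ℕ, 0 < n → Tendsto (fun N : ℕ => (N : ℂ)⁻¹ *
      ∑ k ∈ Finset.range N, fourier (n : ℤ) (z k)) atTop (𝓝 0)) (n : ℤ) :
    Tendsto (fun N => averagingError z N (fourier n)) atTop (𝓝 0) := by
  have hpos : ∀ m : ℕ, 0 < m →
      Tendsto (fun N => averagingError z N (fourier (m : ℤ))) atTop (𝓝 0) := fun m hm => by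
    simpa only [averagingError_apply, integral_fourier_eq_zero (Nat.cast_ne_zero.2 hm.ne'),
      sub_zero] using hz m hm
  rcases lt_trichotomy n 0 with hn | rfl | hn
  · obtain ⟨m, rfl⟩ := Int.exists_eq_neg_ofNat hn.le
    have hm : 0 < m := by omega
    simp only [averagingError_fourier_neg z _ (Nat.cast_ne_zero.2 hm.ne')]
    simpa only [map_zero, Function.comp_def] using
      (Complex.continuous_conj.tendsto _).comp (hpos m hm)
  · refine tendsto_const_nhds.congr' ?_
    filter_upwards [eventually_ne_atTop 0] with N hN
    simp [averagingError_apply, hN, measureReal_def]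
  · lift n to ℕ using hn.le
    exact hpos n (Nat.cast_pos.1 hn)

/-- Weyl's criterion. Negative frequencies are covered by complex conjugation. -/
lemma tendsto_average_of_tendsto_average_fourier {z : ℕ → UnitAddCircle}
    (hz : ∀ n : ℕ, 0 < n → Tendsto (fun N : ℕ => (N : ℂ)⁻¹ *
      ∑ k ∈ Finset.range N, fourier (n : ℤ) (z k)) atTop (𝓝 0)) (f : C(UnitAddCircle, ℝ)) :
    Tendsto (fun N : ℕ => (N : ℝ)⁻¹ * ∑ k ∈ Finset.range N, f (z k)) atTop (𝓝 (∫ x, f x)) := by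
  set F : C(UnitAddCircle, ℂ) := ⟨fun x => (f x : ℂ), by fun_prop⟩
  have hF : Tendsto (fun N => averagingError z N F) atTop (𝓝 0) :=
    tendsto_zero_of_mem_closure_span (s := range (fourier (T := 1))) (norm_averagingError_le z)
      (by rintro _ ⟨n, rfl⟩; exact tendsto_averagingError_fourier hz n)
      (by rw [span_fourier_closure_eq_top]; trivial)
  have hreal : ∀ N, averagingError z N F =
      (((N : ℝ)⁻¹ * ∑ k ∈ Finset.range N, f (z k) - ∫ x, f x : ℝ) : ℂ) := fun N => by
    have hintegral : ∫ x, F x = ((∫ x, f x : ℝ) : ℂ) := integral_ofReal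
    rw [averagingError_apply, hintegral]
    push_cast
    rfl
  simp only [hreal] at hF
  have hsub := (Complex.continuous_re.tendsto _).comp hF
  simpa using hsub.add_const (∫ x, f x)

lemma tendsto_average_exp_mul_I {θ : ℕ → ℝ}
    (hθ : ∀ i : ℕ, ∀ ε > 0, ∀ᶠ N : ℕ in atTop,
      ∑ k ∈ Finset.range N, Real.cos (θ k + i * (Real.pi / 2)) ≤ ε * N) :
    Tendsto (fun N : ℕ => (N : ℂ)⁻¹ * ∑ k ∈ Finset.range N, Complex.exp (θ k * Complex.I))
      atTop (𝓝 0) := by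
  rw [Metric.tendsto_nhds]
  intro ε hε
  have hε3 : 0 < ε / 3 := by positivity
  filter_upwards [hθ 0 _ hε3, hθ 1 _ hε3, hθ 2 _ hε3, hθ 3 _ hε3, eventually_gt_atTop 0]
    with N hcos hsin_neg hcos_neg hsin hN
  have hN' : (0 : ℝ) < N := Nat.cast_pos.2 hN
  have h3 : ∀ x : ℝ, Real.cos (x + 3 * (Real.pi / 2)) = Real.sin x := fun x => by
    rw [show x + 3 * (Real.pi / 2) = x + Real.pi / 2 + Real.pi by ring, Real.cos_add_pi,
      Real.cos_add_pi_div_two, neg_neg]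
  simp only [Nat.cast_zero, zero_mul, add_zero, Nat.cast_one, one_mul, Nat.cast_ofNat, h3,
    mul_div_cancel₀ Real.pi (two_ne_zero' ℝ), Real.cos_add_pi, Real.cos_add_pi_div_two,
    Finset.sum_neg_distrib] at hcos hsin_neg hcos_neg hsin
  rw [dist_zero_right, norm_mul, norm_inv, Complex.norm_natCast, inv_mul_lt_iff₀ hN']
  calc ‖∑ k ∈ Finset.range N, Complex.exp (θ k * Complex.I)‖
      ≤ |∑ k ∈ Finset.range N, Real.cos (θ k)| + |∑ k ∈ Finset.range N, Real.sin (θ k)| := by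
        simpa only [Complex.re_sum, Complex.im_sum, Complex.exp_ofReal_mul_I_re,
          Complex.exp_ofReal_mul_I_im] using Complex.norm_le_abs_re_add_abs_im
            (∑ k ∈ Finset.range N, Complex.exp (θ k * Complex.I))
    _ ≤ ε / 3 * N + ε / 3 * N :=
        add_le_add (abs_le'.2 ⟨hcos, hcos_neg⟩) (abs_le'.2 ⟨hsin, hsin_neg⟩)
    _ < N * ε := by nlinarith

lemma pNormal_of_tendsto_average_exp {p : ℕ} {y : ℝ}
    (hy : ∀ n : ℕ, 0 < n → Tendsto (fun N : ℕ => (N : ℂ)⁻¹ * ∑ k ∈ Finset.range N,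
      Complex.exp ((2 * Real.pi * (n * p * (p : ℝ) ^ k) * y : ℝ) * Complex.I)) atTop (𝓝 0)) :
    PNormal p y := by
  intro f
  have hweyl := tendsto_average_of_tendsto_average_fourier
    (z := fun k => (((p : ℝ) ^ (k + 1) * y : ℝ) : UnitAddCircle)) (fun n hn => ?_) f
  · refine hweyl.congr fun N => ?_
    rw [← Finset.Ico_add_one_right_eq_Icc, Finset.sum_Ico_eq_sum_range]
    simp only [Nat.add_sub_cancel, add_comm 1]
  · refine (hy n hn).congr fun N => ?_
    refine congrArg _ (Finset.sum_congr rfl fun k _ => ?_)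
    rw [fourier_coe_apply]
    congr 1
    push_cast
    ring

lemma ae_forall_pos_eventually_le {Ω : Type*} [MeasurableSpace Ω] {μ : Measure Ω}
    {S : ℕ → Ω → ℝ} (H : ∀ ε > 0, ∀ᵐ x ∂μ, ∀ᶠ N : ℕ in atTop, S N x ≤ ε * N) :
    ∀ᵐ x ∂μ, ∀ ε > 0, ∀ᶠ N : ℕ in atTop, S N x ≤ ε * N := by
  have hcountable : ∀ᵐ x ∂μ, ∀ l : ℕ, ∀ᶠ N : ℕ in atTop, S N x ≤ 1 / (l + 1 : ℝ) * N :=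
    ae_all_iff.2 fun l => H _ (by positivity)
  filter_upwards [hcountable] with x hx ε hε
  obtain ⟨l, hl⟩ := exists_nat_one_div_lt hε
  filter_upwards [hx l] with N hN
  exact hN.trans (mul_le_mul_of_nonneg_right hl.le N.cast_nonneg)

lemma HasSmallLacunarySums.pointwiseAbsolutelyNormal {μ : Measure ℝ}
    (hμ : HasSmallLacunarySums μ) : PointwiseAbsolutelyNormal μ := by
  have hcos : ∀ᵐ y ∂μ, ∀ p : ℕ, 2 ≤ p → ∀ n : ℕ, 0 < n → ∀ i : ℕ, ∀ ε > 0, ∀ᶠ N : ℕ in atTop,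
      ∑ k ∈ Finset.range N, Real.cos (2 * Real.pi * (n * p * (p : ℝ) ^ k) * y + i * (Real.pi / 2))
        ≤ ε * N := by
    simp only [ae_all_iff]
    refine fun p hp n hn i => ae_forall_pos_eventually_le fun ε hε => ?_
    have hp1 : (1 : ℝ) < p := by exact_mod_cast hp
    exact hμ.ae_eventually_sum_cos_le hp1 (by positivity) _ hε
  filter_upwards [hcos] with y hy p hp
  exact pNormal_of_tendsto_average_exp fun n hn => tendsto_average_exp_mul_I (hy p hp n hn)

theorem stmt3_general {ι : Type*} [Fintype ι] {r t : ι → ℝ} {p : ι → ℝ≥0∞} {ν : Measure ℝ}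
    (S : IsSelfSimilar r t p ν)
    (hfix : ∃ i j : ι, ∃ y z : ℝ, r i * y + t i = y ∧ r j * z + t j = z ∧ y ≠ z)
    (haper : IsAperiodic fun i => Real.log |r i|) {a b : ℝ} (hab : a ≤ b)
    (hmaps : ∀ i, MapsTo (fun x => r i * x + t i) (Icc a b) (Icc a b)) {g : ℝ → ℝ}
    (hg : ContDiff ℝ 1 g) (hg' : ∀ x ∈ Icc a b, deriv g x ≠ 0) :
    PointwiseAbsolutelyNormal (ν.map g) ∧ Rajchman (ν.map g) := by
  have hν : Rajchman ν := S.rajchman hfix haper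
  exact ⟨(S.hasSmallLacunarySums_map hν hab hmaps hg hg').pointwiseAbsolutelyNormal,
    S.rajchman_map hν hab hmaps hg hg'⟩

theorem stmt3 {n : ℕ} (hn : 2 ≤ n) (r t : Fin n → ℝ) (f : Fin n → ℝ → ℝ)
    (hf : ∀ i x, f i x = r i * x + t i)
    (hr : ∀ i, 0 < |r i| ∧ |r i| < 1)
    (a b : ℝ) (hab : a < b)
    (hmaps : ∀ i, MapsTo (f i) (Icc a b) (Icc a b))
    (hfix : ∃ i j : Fin n, ∃ y ∈ Icc a b, ∃ z ∈ Icc a b, f i y = y ∧ f j z = z ∧ y ≠ z)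
    (haper : ¬ ∃ c : ℝ, ∀ i, ∃ m : ℤ, Real.log |r i| = c * m)
    (p : Fin n → ℝ≥0∞) (hp : ∀ i, 0 < p i) (hp1 : ∑ i, p i = 1)
    (ν : Measure ℝ) (hνP : IsProbabilityMeasure ν)
    (hν : ν = ∑ i, p i • ν.map (f i))
    (γ : ℝ) (hγ : 0 < γ) (g : ℝ → ℝ)
    (hg1 : ContDiff ℝ 1 g)
    (hgH : ∃ C : ℝ, 0 < C ∧ ∀ x ∈ Icc a b, ∀ y ∈ Icc a b,
      |deriv g x - deriv g y| ≤ C * |x - y| ^ γ)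
    (hg' : ∀ x ∈ Icc a b, deriv g x ≠ 0) :
    PointwiseAbsolutelyNormal (ν.map g) ∧ Rajchman (ν.map g) := by
  obtain rfl : f = fun i x => r i * x + t i := funext fun i => funext (hf i)
  obtain ⟨i, j, y, -, z, -, hy, hz, hyz⟩ := hfix
  exact stmt3_general ⟨hνP, hp, hp1, fun i => (hr i).1, fun i => (hr i).2, hν⟩
    ⟨i, j, y, z, hy, hz, hyz⟩ haper hab.le hmaps hg1 hg'
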